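/- arXiv:1507.07186 — 6 statements merged into one kernel-verified Lean document; each statement's English description precedes it below -/
import Mathlib

section
/- Let A be a C*-algebra and let B be a norm-closed *-subalgebra of A which is a Chebyshev subspace of A. If B has no multiplicative unit (there is no e ∈ B with e b = b = b e for all b ∈ B), then B = A. -/
open Filter Topology

/-- Three orthogonal nonzero self-adjoint elements with local units. -/
def HasTriple (B : Type*) [NonUnitalCStarAlgebra B] : Prop :=
  ∃ e h : Fin 3 → B, (∀ i, IsSelfAdjoint (h i) ∧ h i ≠ 0) ∧
    (∀ i, e i * h i = h i ∧ h i * e i = h i) ∧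
    ∀ i j, i ≠ j → e i * h j = 0 ∧ h j * e i = 0

lemma hasTriple_of_infinite {B : Type*} [NonUnitalCStarAlgebra B] (c : B)
    (hc : IsSelfAdjoint c) (hinf : (quasispectrum ℝ c).Infinite) : HasTriple B := by
  have h1 : (quasispectrum ℝ c \ {0}).Infinite := hinf.sdiff (Set.finite_singleton 0)
  let l : Fin 3 → ℝ := fun i => (h1.natEmbedding _ (i : ℕ) : ℝ)
  have hl : ∀ i, l i ∈ quasispectrum ℝ c := fun i => (h1.natEmbedding _ (i : ℕ)).2.1
  have hl0 : ∀ i, l i ≠ 0 := fun i => (h1.natEmbedding _ (i : ℕ)).2.2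
  have hinj : ∀ i j, i ≠ j → l i ≠ l j := by
    intro i j hij h
    exact hij (Fin.ext ((h1.natEmbedding _).injective (Subtype.ext h)))
  obtain ⟨d, hd, hd0, hdd⟩ : ∃ d : ℝ, 0 < d ∧ (∀ i, 4 * d < |l i|) ∧
      ∀ i j, i ≠ j → 4 * d < |l i - l j| := by
    have key : ∀ a : ℝ, 0 < a → ∀ᶠ d in 𝓝[>] (0 : ℝ), 4 * d < a := by
      intro a ha
      have : Tendsto (fun d : ℝ => 4 * d) (𝓝[>] 0) (𝓝 0) := by
        have : Tendsto (fun d : ℝ => 4 * d) (𝓝 0) (𝓝 (4 * 0)) :=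
          (continuous_const.mul continuous_id).tendsto 0
        rw [mul_zero] at this
        exact this.mono_left nhdsWithin_le_nhds
      exact this.eventually_lt_const ha
    have e1 : ∀ᶠ d in 𝓝[>] (0 : ℝ), ∀ i, 4 * d < |l i| :=
      eventually_all.2 fun i => key _ (abs_pos.2 (hl0 i))
    have e2 : ∀ᶠ d in 𝓝[>] (0 : ℝ), ∀ i j, i ≠ j → 4 * d < |l i - l j| :=
      eventually_all.2 fun i => eventually_all.2 fun j => by
        by_cases hij : i = j
        · exact Eventually.of_forall fun _ h => absurd hij h
        · exact (key _ (abs_pos.2 (sub_ne_zero.2 (hinj i j hij)))).mono fun _ h _ => h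
    obtain ⟨d, ⟨h1, h2⟩, h3⟩ := ((e1.and e2).and self_mem_nhdsWithin).exists
    exact ⟨d, h3, h1, h2⟩
  let h : Fin 3 → ℝ → ℝ := fun i x => max 0 (d - |x - l i|)
  let e : Fin 3 → ℝ → ℝ := fun i x => min 1 (max 0 (2 - |x - l i| / d))
  have hcont : ∀ i, Continuous (h i) := fun i => by fun_prop
  have econt : ∀ i, Continuous (e i) := fun i => by fun_prop
  have hsupp : ∀ i x, d ≤ |x - l i| → h i x = 0 := by
    intro i x hx
    exact max_eq_left (by linarith)
  have esupp : ∀ i x, 2 * d ≤ |x - l i| → e i x = 0 := by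
    intro i x hx
    have : 2 ≤ |x - l i| / d := by rwa [le_div_iff₀ hd]
    simp only [e]
    rw [max_eq_left (by linarith)]
    norm_num
  have eone : ∀ i x, |x - l i| ≤ d → e i x = 1 := by
    intro i x hx
    have : |x - l i| / d ≤ 1 := by rwa [div_le_one hd]
    simp only [e]
    rw [max_eq_right (by linarith), min_eq_left (by linarith)]
  have h00 : ∀ i, h i 0 = 0 := fun i => hsupp i 0 (by
    rw [zero_sub, abs_neg]; linarith [hd0 i])
  have e00 : ∀ i, e i 0 = 0 := fun i => esupp i 0 (by
    rw [zero_sub, abs_neg]; linarith [hd0 i])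
  have eh : ∀ i x, e i x * h i x = h i x := by
    intro i x
    rcases le_total (|x - l i|) d with hx | hx
    · rw [eone i x hx, one_mul]
    · rw [hsupp i x hx, mul_zero]
  have ehz : ∀ i j, i ≠ j → ∀ x, e i x * h j x = 0 := by
    intro i j hij x
    rcases le_total (|x - l j|) d with hx | hx
    · rw [esupp i x, zero_mul]
      have h2 := hdd i j hij
      have h3 : |l i - l j| ≤ |x - l i| + |x - l j| := by
        have := abs_sub_le (l i) x (l j)
        rwa [abs_sub_comm (l i) x] at this
      linarith
    · rw [hsupp j x hx, mul_zero]
  have mulrule : ∀ i j, cfcₙ (e i) c * cfcₙ (h j) c = cfcₙ (fun x => e i x * h j x) c := fun i j =>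
    (cfcₙ_mul (e i) (h j) c (econt i).continuousOn (e00 i) (hcont j).continuousOn (h00 j)).symm
  have comm : ∀ i j, cfcₙ (h j) c * cfcₙ (e i) c = cfcₙ (e i) c * cfcₙ (h j) c := fun i j =>
    cfcₙ_commute_cfcₙ (h j) (e i) c
  refine ⟨fun i => cfcₙ (e i) c, fun i => cfcₙ (h i) c, fun i => ⟨cfcₙ_predicate _ _, ?_⟩, fun i => ?_,
    fun i j hij => ?_⟩
  · intro h0
    have h1 := eqOn_of_cfcₙ_eq_cfcₙ (h0.trans (cfcₙ_zero ℝ c).symm) hc (hcont i).continuousOn (h00 i)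
      continuousOn_const rfl (hl i)
    simp [h] at h1
    linarith
  · have : cfcₙ (e i) c * cfcₙ (h i) c = cfcₙ (h i) c := by
      rw [mulrule]; congr 1; funext x; exact eh i x
    exact ⟨this, (comm i i).trans this⟩
  · have : cfcₙ (e i) c * cfcₙ (h j) c = 0 := by
      rw [mulrule, ← cfcₙ_const_zero ℝ c]; congr 1; funext x; exact ehz i j hij x
    exact ⟨this, (comm i j).trans this⟩

lemma exists_proj {B : Type*} [NonUnitalCStarAlgebra B] (c : B)
    (hc : IsSelfAdjoint c) (hc0 : c ≠ 0) (hfin : (quasispectrum ℝ c).Finite) :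
    ∃ p g : B, IsSelfAdjoint p ∧ p * p = p ∧ p ≠ 0 ∧ p = c * g ∧ p = g * c := by
  have : ∃ l ∈ quasispectrum ℝ c, l ≠ 0 := by
    by_contra! hcon
    exact hc0 (CFC.eq_zero_of_quasispectrum_eq_zero (R := ℝ) c (fun x hx => hcon x hx) hc)
  obtain ⟨l, hl, hl0⟩ := this
  let f : ℝ → ℝ := fun x => if x = l then 1 else 0
  let g : ℝ → ℝ := fun x => if x = l then l⁻¹ else 0
  have f0 : f 0 = 0 := by simp [f, hl0.symm]
  have g0 : g 0 = 0 := by simp [g, hl0.symm]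
  have fc : ContinuousOn f (quasispectrum ℝ c) := hfin.continuousOn _
  have gc : ContinuousOn g (quasispectrum ℝ c) := hfin.continuousOn _
  have e1 : cfcₙ f c = c * cfcₙ g c := by
    conv_rhs => enter [1]; rw [← cfcₙ_id' ℝ c]
    rw [← cfcₙ_mul (fun x => x) g c continuousOn_id rfl gc g0]
    congr 1; funext x
    by_cases hx : x = l
    · simp [f, g, hx, hl0]
    · simp [f, g, hx]
  have e2 : cfcₙ f c = cfcₙ g c * c := by
    conv_rhs => enter [2]; rw [← cfcₙ_id' ℝ c]
    rw [← cfcₙ_mul g (fun x => x) c gc g0 continuousOn_id rfl]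
    congr 1; funext x
    by_cases hx : x = l
    · simp [f, g, hx, hl0]
    · simp [f, g, hx]
  refine ⟨cfcₙ f c, cfcₙ g c, cfcₙ_predicate _ _, ?_, ?_, e1, e2⟩
  · rw [← cfcₙ_mul f f c fc f0 fc f0]
    congr 1; funext x
    by_cases hx : x = l <;> simp [f, hx]
  · intro h0
    have h1 := eqOn_of_cfcₙ_eq_cfcₙ (h0.trans (cfcₙ_zero ℝ c).symm) hc fc f0
      continuousOn_const rfl hl
    simp [f] at h1

lemma exists_orth {B : Type*} [NonUnitalCStarAlgebra B]
    (hnounit : ¬ ∃ e : B, ∀ b : B, e * b = b ∧ b * e = b) (e : B) (he : IsSelfAdjoint e)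
    (hee : e * e = e) : ∃ c : B, IsSelfAdjoint c ∧ c ≠ 0 ∧ e * c = 0 ∧ c * e = 0 := by
  by_contra! hcon
  have key : ∀ b : B, b = e * b := by
    intro b
    have hs : IsSelfAdjoint ((b - e * b) * star (b - e * b)) := IsSelfAdjoint.mul_star_self _
    have h1 : e * ((b - e * b) * star (b - e * b)) = 0 := by
      rw [← mul_assoc, mul_sub, ← mul_assoc, hee, sub_self, zero_mul]
    by_contra hb
    refine hcon _ hs ?_ h1 ?_
    · rw [Ne, CStarRing.mul_star_self_eq_zero_iff, sub_eq_zero]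
      exact hb
    · have := congrArg star h1
      rwa [star_mul, hs.star_eq, he.star_eq, star_zero] at this
  refine hnounit ⟨e, fun b => ⟨(key b).symm, ?_⟩⟩
  have := congrArg star (key (star b))
  rw [star_mul, star_star, he.star_eq] at this
  exact this.symm

lemma hasTriple {B : Type*} [NonUnitalCStarAlgebra B]
    (hnounit : ¬ ∃ e : B, ∀ b : B, e * b = b ∧ b * e = b) : HasTriple B := by
  by_cases hfin : ∃ c : B, IsSelfAdjoint c ∧ (quasispectrum ℝ c).Infinite
  · obtain ⟨c, hc, h⟩ := hfin
    exact hasTriple_of_infinite c hc h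
  have step : ∀ e : B, IsSelfAdjoint e → e * e = e →
      ∃ p : B, IsSelfAdjoint p ∧ p * p = p ∧ p ≠ 0 ∧ e * p = 0 ∧ p * e = 0 := by
    intro e he hee
    obtain ⟨c, hc, hc0, h1, h2⟩ := exists_orth hnounit e he hee
    obtain ⟨p, g, hp, hpp, hp0, e1, e2⟩ := exists_proj c hc hc0 (by
      by_contra h
      exact hfin ⟨c, hc, h⟩)
    refine ⟨p, hp, hpp, hp0, ?_, ?_⟩
    · rw [e1, ← mul_assoc, h1, zero_mul]
    · rw [e2, mul_assoc, h2, mul_zero]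
  obtain ⟨p, hp, hpp, hp0, -, -⟩ := step 0 (IsSelfAdjoint.zero _) (mul_zero _)
  obtain ⟨q, hq, hqq, hq0, pq, qp⟩ := step p hp hpp
  obtain ⟨r, hr, hrr, hr0, h1, h2⟩ := step (p + q) (hp.add hq) (by
    simp [mul_add, add_mul, hpp, hqq, pq, qp])
  have pr : p * r = 0 := by
    have := congrArg (p * ·) h1
    simpa [← mul_assoc, mul_add, hpp, pq] using this
  have qr : q * r = 0 := by
    have := congrArg (q * ·) h1
    simpa [← mul_assoc, mul_add, hqq, qp] using this
  have rp : r * p = 0 := by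
    have := congrArg (· * p) h2
    simpa [mul_assoc, add_mul, hpp, qp] using this
  have rq : r * q = 0 := by
    have := congrArg (· * q) h2
    simpa [mul_assoc, add_mul, hqq, pq] using this
  refine ⟨![p, q, r], ![p, q, r], ?_, ?_, ?_⟩
  · intro i; fin_cases i
    · exact ⟨hp, hp0⟩
    · exact ⟨hq, hq0⟩
    · exact ⟨hr, hr0⟩
  · intro i; fin_cases i
    · exact ⟨hpp, hpp⟩
    · exact ⟨hqq, hqq⟩
    · exact ⟨hrr, hrr⟩
  · intro i j hij
    fin_cases i <;> fin_cases j <;> simp_all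

lemma exists_cayley {B : Type*} [NonUnitalCStarAlgebra B] (b : B) (hb : IsSelfAdjoint b) :
    ∃ w : B, w - Complex.I • (b * w) = (2 * Complex.I) • b ∧
      w - Complex.I • (w * b) = (2 * Complex.I) • b ∧
      w + star w + star w * w = 0 ∧ w + star w + w * star w = 0 := by
  let f : ℝ → ℝ := fun x => x / (1 + x ^ 2)
  have hne : ∀ x : ℝ, 1 + x ^ 2 ≠ 0 := fun x => by positivity
  have fc : Continuous f := continuous_id.div (by fun_prop) hne
  have f0 : f 0 = 0 := by simp [f]
  obtain ⟨r, hr⟩ : ∃ r, r = cfcₙ f b := ⟨_, rfl⟩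
  have hrs : IsSelfAdjoint r := hr ▸ cfcₙ_predicate _ _
  have hcomm : r * b = b * r := by
    have := cfcₙ_commute_cfcₙ f (fun x : ℝ => x) b
    rw [cfcₙ_id' ℝ b, ← hr] at this
    exact this
  have hrel : r + b * (b * r) = b := by
    have e1 : b * r = cfcₙ (fun x => x * f x) b := by
      rw [cfcₙ_mul (fun x => x) f b continuousOn_id rfl fc.continuousOn f0, cfcₙ_id' ℝ b, hr]
    have c2 : Continuous (fun x => x * f x) := continuous_id.mul fc
    have e2 : b * (b * r) = cfcₙ (fun x => x * (x * f x)) b := by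
      rw [cfcₙ_mul (fun x => x) (fun x => x * f x) b continuousOn_id rfl c2.continuousOn (by simp),
        cfcₙ_id' ℝ b, e1]
    rw [e2, hr, ← cfcₙ_add f (fun x => x * (x * f x)) b fc.continuousOn f0
      (continuous_id.mul c2).continuousOn (by simp)]
    conv_rhs => rw [← cfcₙ_id' ℝ b]
    congr 1; funext x
    have := hne x
    simp only [f]
    field_simp
  have hI : Complex.I * Complex.I = -1 := Complex.I_mul_I
  have hrr : r * r + b * (b * (r * r)) = b * r := by
    have := congrArg (· * r) hrel
    simpa [add_mul, mul_assoc] using this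
  have hw : ∀ x : B, r * (b * x) = b * (r * x) := fun x => by
    rw [← mul_assoc, hcomm, mul_assoc]
  have hstar : star ((2 * Complex.I) • r - (2 : ℂ) • (b * r)) =
      (-(2 * Complex.I)) • r - (2 : ℂ) • (b * r) := by
    simp [star_sub, star_smul, hrs.star_eq, hb.star_eq, hcomm]
  have main1 : ((2 * Complex.I) • r - (2 : ℂ) • (b * r)) -
      Complex.I • (b * ((2 * Complex.I) • r - (2 : ℂ) • (b * r))) = (2 * Complex.I) • b := by
    conv_rhs => rw [← hrel]
    simp only [mul_sub, mul_smul_comm, smul_sub, smul_smul, smul_add]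
    rw [show Complex.I * (2 * Complex.I) = -2 by linear_combination 2 * hI]
    module
  have hc1 : 2 * (Complex.I * -(2 * Complex.I)) = 4 := by linear_combination (-4) * hI
  have hc2 : -(2 * Complex.I) * (2 * Complex.I) = 4 := by linear_combination (-4) * hI
  refine ⟨(2 * Complex.I) • r - (2 : ℂ) • (b * r), main1, ?_, ?_, ?_⟩
  · rw [← main1]
    simp only [mul_sub, sub_mul, mul_smul_comm, smul_mul_assoc, mul_assoc, hcomm]
  · rw [hstar]
    simp only [mul_sub, sub_mul, mul_smul_comm, smul_mul_assoc, mul_assoc, hw, smul_sub,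
      smul_smul]
    simp only [hc1, hc2]
    have : (4 : ℂ) • (b * r) = (4 : ℂ) • (r * r) + (4 : ℂ) • (b * (b * (r * r))) := by
      rw [← smul_add, hrr]
    rw [show (2:ℂ) • (b * r) = (1/2 : ℂ) • (4:ℂ) • (b * r) by module, this]
    module
  · rw [hstar]
    simp only [mul_sub, sub_mul, mul_smul_comm, smul_mul_assoc, mul_assoc, hw, smul_sub,
      smul_smul]
    simp only [hc1, hc2]
    have : (4 : ℂ) • (b * r) = (4 : ℂ) • (r * r) + (4 : ℂ) • (b * (b * (r * r))) := by
      rw [← smul_add, hrr]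
    rw [show (2:ℂ) • (b * r) = (1/2 : ℂ) • (4:ℂ) • (b * r) by module, this]
    module

lemma norm_left {A : Type*} [NonUnitalCStarAlgebra A] (w x : A)
    (hw : w + star w + star w * w = 0) : ‖x + w * x‖ = ‖x‖ := by
  have h : star (x + w * x) * (x + w * x) = star x * x := by
    have : star (x + w * x) * (x + w * x) =
        star x * x + star x * ((w + star w + star w * w) * x) := by
      simp only [star_add, star_mul]; noncomm_ring
    rw [this, hw, zero_mul, mul_zero, add_zero]
  have h2 := congrArg norm h
  rw [CStarRing.norm_star_mul_self, CStarRing.norm_star_mul_self] at h2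
  exact (mul_self_inj (norm_nonneg _) (norm_nonneg _)).1 h2

lemma norm_right {A : Type*} [NonUnitalCStarAlgebra A] (w x : A)
    (hw : w + star w + w * star w = 0) : ‖x + x * w‖ = ‖x‖ := by
  have h := norm_left (star w) (star x) (by rw [star_star, add_comm (star w)]; exact hw)
  rw [← star_mul, ← star_add, norm_star, norm_star] at h
  exact h

lemma mem_of_orth {A : Type*} [NonUnitalCStarAlgebra A]
    (B : NonUnitalStarSubalgebra ℂ A) (hBclosed : IsClosed (B : Set A))
    (hCheb : ∀ x : A, ∃! v : A, v ∈ B ∧ ‖x - v‖ = Metric.infDist x (B : Set A))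
    (y b : A) (hb : b ∈ B) (hbs : IsSelfAdjoint b) (hb0 : b ≠ 0) (yb : y * b = 0)
    (by0 : b * y = 0) : y ∈ B := by
  by_contra hy
  obtain ⟨v, ⟨hv, hvn⟩, huniq⟩ := hCheb y
  have uniq : ∀ v' ∈ B, ‖y - v'‖ = ‖y - v‖ → v' = v := fun v' h1 h2 =>
    huniq v' ⟨h1, h2.trans hvn⟩
  obtain ⟨w, hw, w1, w2, w3, w4⟩ : ∃ w ∈ B, w - Complex.I • (b * w) = (2 * Complex.I) • b ∧
      w - Complex.I • (w * b) = (2 * Complex.I) • b ∧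
      w + star w + star w * w = 0 ∧ w + star w + w * star w = 0 := by
    haveI := hBclosed
    obtain ⟨w, w1, w2, w3, w4⟩ := exists_cayley (B := B) ⟨b, hb⟩ (Subtype.ext hbs)
    exact ⟨w, w.2, congrArg Subtype.val w1, congrArg Subtype.val w2, congrArg Subtype.val w3,
      congrArg Subtype.val w4⟩
  have hne : (2 * Complex.I) ≠ 0 := by simp
  have wy : w * y = 0 := by
    have := congrArg (· * y) w2
    simpa [sub_mul, mul_assoc, by0, smul_mul_assoc] using this
  have yw : y * w = 0 := by
    have := congrArg (y * ·) w1
    simpa [mul_sub, ← mul_assoc, yb, mul_smul_comm] using this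
  have wv : w * v = 0 := by
    have h1 := norm_left w (y - v) w3
    have h2 := uniq (v + w * v) (B.add_mem hv (B.mul_mem hw hv)) (by
      rw [← h1, mul_sub, wy]; congr 1; abel)
    simpa using h2
  have vw : v * w = 0 := by
    have h1 := norm_right w (y - v) w4
    have h2 := uniq (v + v * w) (B.add_mem hv (B.mul_mem hv hw)) (by
      rw [← h1, sub_mul, yw]; congr 1; abel)
    simpa using h2
  have bv : b * v = 0 := by
    have := (congrArg (· * v) w1).symm
    simpa [sub_mul, mul_assoc, wv, smul_mul_assoc] using this
  have vb : v * b = 0 := by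
    have := (congrArg (v * ·) w2).symm
    simpa [mul_sub, ← mul_assoc, vw, mul_smul_comm] using this
  obtain ⟨z, hz⟩ : ∃ z, z = y - v := ⟨_, rfl⟩
  have zb : z * b = 0 := by rw [hz, sub_mul, yb, vb, sub_zero]
  have bz : b * z = 0 := by rw [hz, mul_sub, by0, bv, sub_zero]
  have hz0 : 0 < ‖z‖ := by
    rw [norm_pos_iff, hz, sub_ne_zero]
    rintro rfl
    exact hy hv
  have hbn : 0 < ‖b‖ := norm_pos_iff.2 hb0
  obtain ⟨t, ht⟩ : ∃ t : ℝ, t = ‖z‖ / ‖b‖ := ⟨_, rfl⟩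
  have ht0 : 0 < t := ht ▸ div_pos hz0 hbn
  obtain ⟨a, ha⟩ : ∃ a : A, a = (t : ℂ) • b := ⟨_, rfl⟩
  have haB : a ∈ B := ha ▸ SMulMemClass.smul_mem _ hb
  have han : ‖a‖ = ‖z‖ := by
    rw [ha, norm_smul, Complex.norm_real, Real.norm_of_nonneg ht0.le, ht,
      div_mul_cancel₀ _ hbn.ne']
  have hza : z * a = 0 := by rw [ha, mul_smul_comm, zb, smul_zero]
  have haz : a * z = 0 := by rw [ha, smul_mul_assoc, bz, smul_zero]
  have has : star a = a := by rw [ha]; simp [star_smul, hbs.star_eq]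
  have hsza : star z * a = 0 := by
    have := congrArg star haz
    simpa [star_mul, has] using this
  have hnorm : ‖z - a‖ = ‖z‖ := by
    have h1 : star (z - a) * (z - a) = star z * z + star a * a := by
      simp [star_sub, has, mul_sub, sub_mul, hsza, haz]
    have h2 := (IsSelfAdjoint.star_mul_self z).norm_add_eq_max (IsSelfAdjoint.star_mul_self a)
      (by rw [has, mul_assoc, ← mul_assoc z a a, hza, zero_mul, mul_zero])
    rw [← h1, CStarRing.norm_star_mul_self, CStarRing.norm_star_mul_self,
      CStarRing.norm_star_mul_self, han, max_self] at h2
    exact (mul_self_inj (norm_nonneg _) (norm_nonneg _)).1 h2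
  have := uniq (v + a) (B.add_mem hv haB) (by
    rw [← hz, ← hnorm, hz]; congr 1; abel)
  have ha0 : a = 0 := by simpa using this
  rw [ha0, norm_zero] at han
  exact hz0.ne han

lemma main_aux {A : Type*} [NonUnitalCStarAlgebra A]
    (B : NonUnitalStarSubalgebra ℂ A) (hBclosed : IsClosed (B : Set A))
    (hCheb : ∀ x : A, ∃! v : A, v ∈ B ∧ ‖x - v‖ = Metric.infDist x (B : Set A))
    (hnounit : ¬ ∃ e ∈ B, ∀ b ∈ B, e * b = b ∧ b * e = b) :
    B = ⊤ := by
  haveI := hBclosed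
  have hT : HasTriple B := hasTriple (fun ⟨e, he⟩ => hnounit ⟨e, e.2, fun b hb =>
    ⟨congrArg Subtype.val (he ⟨b, hb⟩).1, congrArg Subtype.val (he ⟨b, hb⟩).2⟩⟩)
  obtain ⟨e', h', h1, h2, h3⟩ := hT
  obtain ⟨e, he⟩ : ∃ e : Fin 3 → A, ∀ i, e i = e' i := ⟨fun i => e' i, fun _ => rfl⟩
  obtain ⟨h, hh⟩ : ∃ h : Fin 3 → A, ∀ i, h i = h' i := ⟨fun i => h' i, fun _ => rfl⟩
  have eh : ∀ i, e i * h i = h i := fun i => by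
    rw [he, hh]; exact congrArg Subtype.val (h2 i).1
  have hhe : ∀ i, h i * e i = h i := fun i => by
    rw [he, hh]; exact congrArg Subtype.val (h2 i).2
  have eh0 : ∀ i j, i ≠ j → e i * h j = 0 := fun i j hij => by
    rw [he, hh]; exact congrArg Subtype.val (h3 i j hij).1
  have he0 : ∀ i j, i ≠ j → h j * e i = 0 := fun i j hij => by
    rw [he, hh]; exact congrArg Subtype.val (h3 i j hij).2
  have mem : ∀ (k : Fin 3) (y : A), h k * y = 0 → y * h k = 0 → y ∈ B := by
    intro k y hl hr
    refine mem_of_orth B hBclosed hCheb y (h k) ?_ ?_ ?_ hr hl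
    · rw [hh]; exact (h' k).2
    · rw [hh]; exact congrArg Subtype.val (h1 k).1
    · rw [hh]; intro h0; exact (h1 k).2 (Subtype.ext h0)
  have hs : ∀ k, h k * ∑ i, e i = h k := fun k => by
    rw [Finset.mul_sum, Finset.sum_eq_single k (fun i _ hi => he0 i k hi) (by simp), hhe]
  have sh : ∀ k, (∑ i, e i) * h k = h k := fun k => by
    rw [Finset.sum_mul, Finset.sum_eq_single k (fun i _ hi => eh0 i k hi) (by simp), eh]
  obtain ⟨s, hs'⟩ : ∃ s, s = ∑ i, e i := ⟨_, rfl⟩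
  rw [← hs'] at hs sh
  have hs2 : ∀ k (x : A), h k * (s * x) = h k * x := fun k x => by rw [← mul_assoc, hs]
  have he2 : ∀ i k (x : A), i ≠ k → h k * (e i * x) = 0 := fun i k x hik => by
    rw [← mul_assoc, he0 i k hik, zero_mul]
  rw [eq_top_iff]
  intro x _
  have m1 : x - s * x - x * s + s * x * s ∈ B := mem 0 _
    (by simp [mul_add, mul_sub, mul_assoc, hs2])
    (by simp [add_mul, sub_mul, mul_assoc, sh])
  have ex2 : ∀ i : Fin 3, ∃ k, i ≠ k := by decide
  have ex3 : ∀ i j : Fin 3, ∃ k, i ≠ k ∧ j ≠ k := by decide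
  have m2 : ∀ i, e i * x - e i * x * s ∈ B := fun i => by
    obtain ⟨k, hk⟩ := ex2 i
    exact mem k _ (by simp [mul_sub, mul_assoc, he2 i k _ hk])
      (by simp [sub_mul, mul_assoc, sh])
  have m3 : ∀ i, x * e i - s * x * e i ∈ B := fun i => by
    obtain ⟨k, hk⟩ := ex2 i
    exact mem k _ (by simp [mul_sub, mul_assoc, hs2])
      (by simp [sub_mul, mul_assoc, eh0 i k hk])
  have m4 : ∀ i j, e i * x * e j ∈ B := fun i j => by
    obtain ⟨k, hik, hjk⟩ := ex3 i j
    exact mem k _ (by simp [mul_assoc, he2 i k _ hik])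
      (by simp [mul_assoc, eh0 j k hjk])
  have s2 : s * x - s * x * s ∈ B := by
    have := sum_mem (S := B) (t := Finset.univ) (fun i _ => m2 i)
    rwa [Finset.sum_sub_distrib, ← Finset.sum_mul, ← Finset.sum_mul, ← Finset.sum_mul, ← hs'] at this
  have s3 : x * s - s * x * s ∈ B := by
    have := sum_mem (S := B) (t := Finset.univ) (fun i _ => m3 i)
    rwa [Finset.sum_sub_distrib, ← Finset.mul_sum, ← Finset.mul_sum, ← hs'] at this
  have s4 : s * x * s ∈ B := by
    have := sum_mem (S := B) (t := Finset.univ) (fun i _ =>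
      sum_mem (S := B) (t := Finset.univ) (fun j _ => m4 i j))
    simp only [← Finset.mul_sum] at this
    rwa [← hs', ← Finset.sum_mul, ← Finset.sum_mul, ← hs'] at this
  have := add_mem (add_mem (add_mem m1 s2) s3) s4
  convert this using 1
  abel

/-- Let `A` be a C*-algebra and `B` a norm-closed *-subalgebra of `A`
which is a Chebyshev subspace of `A`. If `B` has no multiplicative unit, then
`B = A`. -/
theorem cebysev_nonunital_subalgebra_eq
    {A : Type*} [NonUnitalNormedRing A] [StarRing A] [CStarRing A]
    [NormedSpace ℂ A] [IsScalarTower ℂ A A] [SMulCommClass ℂ A A]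
    [StarModule ℂ A] [CompleteSpace A]
    (B : NonUnitalStarSubalgebra ℂ A) (hBclosed : IsClosed (B : Set A))
    (hCheb : ∀ x : A, ∃! v : A, v ∈ B ∧ ‖x - v‖ = Metric.infDist x (B : Set A))
    (hnounit : ¬ ∃ e ∈ B, ∀ b ∈ B, e * b = b ∧ b * e = b) :
    B = ⊤ := by
  letI : NonUnitalCStarAlgebra A := {}
  exact main_aux B hBclosed hCheb hnounit
end

section
/- Let A be a unital C*-algebra and let B be a nonzero norm-closed *-subalgebra of A which is a Chebyshev subspace of A. Then exactly one of the following holds: B = A; or B = ℂ·1 (the scalar multiples of the unit of A); or there exists a *-algebra isomorphism φ : A → M₂(ℂ) (the 2×2 complex matrices) such that φ(B) is the subalgebra of diagonal matrices. -/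
namespace Cheb

variable {A : Type*} [CStarAlgebra A]

lemma unit_mem [Nontrivial A] (B : NonUnitalStarSubalgebra ℂ A) (hBclosed : IsClosed (B : Set A))
    (hB0 : B ≠ ⊥)
    (hCheb : ∀ x : A, ∃! v : A, v ∈ B ∧ ‖x - v‖ = Metric.infDist x (B : Set A)) :
    (1 : A) ∈ B := by
  by_contra h1
  have key : ∀ b ∈ B, 1 ≤ ‖1 - b‖ := by
    intro b hb
    by_contra! hlt
    apply h1
    have hmem : ∀ n : ℕ, 1 - (1 - b) ^ n ∈ B := by
      intro n
      induction n with
      | zero => simp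
      | succ n ih =>
        have : 1 - (1 - b) ^ (n + 1) = b + (1 - (1 - b) ^ n) - b * (1 - (1 - b) ^ n) := by
          rw [pow_succ']; noncomm_ring
        rw [this]
        exact sub_mem (add_mem hb ih) (mul_mem hb ih)
    have ht := tendsto_pow_atTop_nhds_zero_of_norm_lt_one hlt
    have ht2 := (tendsto_const_nhds (x := (1:A))).sub ht
    rw [sub_zero] at ht2
    exact hBclosed.mem_of_tendsto ht2 (Filter.Eventually.of_forall hmem)
  have hd : Metric.infDist (1 : A) (B : Set A) = 1 := by
    apply le_antisymm
    · have := Metric.infDist_le_dist_of_mem (x := (1 : A)) (zero_mem B : (0 : A) ∈ (B : Set A))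
      simpa using this
    · apply (Metric.le_infDist ⟨0, zero_mem B⟩).2
      intro y hy
      rw [dist_eq_norm]; exact key y hy
  obtain ⟨b, hb, hb0⟩ : ∃ b ∈ B, b ≠ 0 := by
    by_contra! hcon
    apply hB0
    ext x
    simp only [NonUnitalStarAlgebra.mem_bot]
    exact ⟨hcon x, fun h => h ▸ zero_mem B⟩
  let _ := CStarAlgebra.spectralOrder A
  have := CStarAlgebra.spectralOrderedRing A
  set c : A := ((‖b‖⁻¹ : ℝ) : ℂ) • b with hc
  have hcB : c ∈ B := SMulMemClass.smul_mem _ hb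
  have hcn : ‖c‖ = 1 := by
    rw [hc, norm_smul]; simp [hb0]
  set k := star c * c with hk
  have hkB : k ∈ B := mul_mem (star_mem hcB) hcB
  have hkn : ‖k‖ = 1 := by rw [hk, CStarRing.norm_star_mul_self, hcn, one_mul]
  have hk0 : 0 ≤ k := star_mul_self_nonneg c
  have hk1 : k ≤ 1 := (CStarAlgebra.norm_le_one_iff_of_nonneg k hk0).1 hkn.le
  have h3 : ‖1 - k‖ ≤ 1 := (CStarAlgebra.norm_le_one_iff_of_nonneg (1 - k) (sub_nonneg.2 hk1)).2
    (sub_le_self _ hk0)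
  have := (hCheb 1).unique ⟨zero_mem B, by simp [hd]⟩ ⟨hkB, by
    rw [hd]; exact le_antisymm h3 (key k hkB)⟩
  rw [← this] at hkn
  simp at hkn

variable (S : StarSubalgebra ℂ A)

def IsCheb : Prop := ∀ x : A, ∃! v : A, v ∈ S ∧ ‖x - v‖ = Metric.infDist x (S : Set A)

variable {S}

lemma IsCheb.eq (h : IsCheb S) {x v w : A} (hv : v ∈ S)
    (hvx : ‖x - v‖ = Metric.infDist x (S : Set A)) (hw : w ∈ S) (hle : ‖x - w‖ ≤ ‖x - v‖) :
    w = v := by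
  refine (h x).unique ⟨hw, le_antisymm (hle.trans hvx.le) ?_⟩ ⟨hv, hvx⟩
  rw [← dist_eq_norm]
  exact Metric.infDist_le_dist_of_mem hw

lemma norm_orth {y z : A} (h1 : star y * z = 0) (h2 : y * star z = 0) (hn : ‖z‖ ≤ ‖y‖) :
    ‖y + z‖ ≤ ‖y‖ := by
  have h3 : star z * y = 0 := by simpa using congrArg star h1
  have e : star (y + z) * (y + z) = star y * y + star z * z := by
    rw [star_add, add_mul, mul_add, mul_add, h1, h3]; simp
  have h4 := IsSelfAdjoint.norm_add_eq_max (IsSelfAdjoint.star_mul_self y)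
    (IsSelfAdjoint.star_mul_self z) (by
      rw [mul_assoc, ← mul_assoc y, h2]; simp)
  rw [← e, CStarRing.norm_star_mul_self, CStarRing.norm_star_mul_self,
    CStarRing.norm_star_mul_self, max_eq_left (mul_self_le_mul_self (norm_nonneg _) hn)] at h4
  exact (mul_self_le_mul_self_iff (norm_nonneg _) (norm_nonneg _)).2 h4.le

/-- main lemma -/
lemma IsCheb.corner (h : IsCheb S) {e g x : A} (he : e ∈ S) (hes : IsSelfAdjoint e)
    (hen : ‖1 - e‖ ≤ 1) (hg : g ∈ S) (hgs : IsSelfAdjoint g) (hg0 : g ≠ 0)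
    (heg : e * g = g) (hex : e * x = 0) (hxe : x * e = 0) : x ∈ S := by
  have hge : g * e = g := by
    have := congrArg star heg
    rwa [star_mul, hes.star_eq, hgs.star_eq] at this
  obtain ⟨b, ⟨hb, hbx⟩, -⟩ := h x
  set f := 1 - e with hf
  have hfS : f ∈ S := sub_mem (one_mem S) he
  have hfs : star f = f := by rw [hf, star_sub, star_one, hes.star_eq]
  have hfx : f * x * f = x := by
    rw [hf, sub_mul, hex, one_mul, sub_zero, mul_sub, hxe, mul_one, sub_zero]
  have hfg : f * g = 0 := by rw [hf, sub_mul, heg, one_mul, sub_self]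
  have hgf : g * f = 0 := by rw [hf, mul_sub, hge, mul_one, sub_self]
  clear_value f
  have hbb : f * b * f = b := by
    apply h.eq hb hbx (mul_mem (mul_mem hfS hb) hfS)
    have : x - f * b * f = f * (x - b) * f := by
      rw [mul_sub, sub_mul, hfx]
    rw [this]
    calc ‖f * (x - b) * f‖ ≤ ‖f * (x - b)‖ * ‖f‖ := norm_mul_le _ _
      _ ≤ (‖f‖ * ‖x - b‖) * ‖f‖ := by gcongr; exact norm_mul_le _ _
      _ ≤ (1 * ‖x - b‖) * 1 := by gcongr
      _ = _ := by ring
  have hyf : f * (x - b) * f = x - b := by rw [mul_sub, sub_mul, hfx, hbb]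
  set y := x - b with hy
  set z : A := ((‖y‖ * ‖g‖⁻¹ : ℝ) : ℂ) • g with hz
  have hgn : ‖g‖ ≠ 0 := norm_ne_zero_iff.2 hg0
  have hzn : ‖z‖ = ‖y‖ := by
    rw [hz, norm_smul, Complex.norm_real, Real.norm_of_nonneg (by positivity)]
    field_simp
  have hzS : z ∈ S := S.smul_mem hg _
  have hn : ‖y + z‖ ≤ ‖y‖ := by
    apply norm_orth _ _ hzn.le
    · have : star y * g = 0 := by
        rw [← hyf, star_mul, star_mul, hfs, mul_assoc, mul_assoc, hfg]; simp
      rw [hz, mul_smul_comm, this, smul_zero]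
    · have : y * g = 0 := by
        rw [← hyf, mul_assoc, hfg]; simp
      rw [hz, star_smul, hgs.star_eq, mul_smul_comm, this, smul_zero]
  have := h.eq hb hbx (sub_mem hb hzS) (by
    rw [show x - (b - z) = y + z by rw [hy]; abel]; exact hn)
  have hz0 : z = 0 := by simpa using this
  have hy0 : y = 0 := by rw [← norm_eq_zero, ← hzn, hz0, norm_zero]
  rw [sub_eq_zero.1 hy0]; exact hb

noncomputable def bump (r p t : ℝ) : ℝ := max 0 (min 1 (2 - |t - p| / r))

@[fun_prop]
lemma bump_cont (r p : ℝ) : Continuous (bump r p) := by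
  unfold bump; fun_prop

lemma bump_one {r p t : ℝ} (hr : 0 < r) (h : |t - p| ≤ r) : bump r p t = 1 := by
  have : |t - p| / r ≤ 1 := (div_le_one hr).2 h
  rw [bump, min_eq_left (by linarith), max_eq_right zero_le_one]

lemma bump_zero {r p t : ℝ} (hr : 0 < r) (h : 2 * r ≤ |t - p|) : bump r p t = 0 := by
  have : 2 ≤ |t - p| / r := (le_div_iff₀ hr).2 h
  rw [bump, max_eq_left]
  exact (min_le_right _ _).trans (by linarith)

lemma bump_nonneg (r p t : ℝ) : 0 ≤ bump r p t := le_max_left _ _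
lemma bump_le (r p t : ℝ) : bump r p t ≤ 1 := max_le zero_le_one (min_le_left _ _)

noncomputable def E (h : A) (r p : ℝ) : A := cfc (bump r p) h

lemma E_comm (h : A) (r p r' p' : ℝ) : E h r p * E h r' p' = E h r' p' * E h r p :=
  cfc_commute_cfc _ _ _

lemma E_sub {h : A} {r r' p : ℝ} (hr : 0 < r) (hr' : 2 * r ≤ r') :
    E h r' p * E h r p = E h r p := by
  unfold E
  rw [← cfc_mul _ _ h]
  congr 1
  ext t
  rcases le_total (|t - p|) (2 * r) with h1 | h1
  · rw [bump_one (by linarith) (h1.trans hr'), one_mul]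
  · rw [bump_zero hr h1, mul_zero]

lemma E_orth {h : A} {r r' p p' d : ℝ} (hr : 0 < r) (hr' : 0 < r') (hrd : r ≤ d) (hrd' : r' ≤ d)
    (hd : 4 * d ≤ |p - p'|) : E h r p * E h r' p' = 0 := by
  unfold E
  rw [← cfc_mul _ _ h]
  have : (fun t => bump r p t * bump r' p' t) = fun _ => 0 := by
    ext t
    rcases le_total (2 * r) (|t - p|) with h1 | h1
    · rw [bump_zero hr h1, zero_mul]
    · rw [bump_zero hr' (p := p'), mul_zero]
      have := abs_sub_le p t p'
      rw [abs_sub_comm p t] at this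
      linarith
  rw [this]
  exact cfc_const_zero ℝ h

lemma E_mem (hS : IsClosed (S : Set A)) {h : A} (hh : h ∈ S) (r p : ℝ) : E h r p ∈ S :=
  haveI := hS
  cfc_mem (𝕜 := ℝ) (𝕜' := ℂ) _ hh

lemma E_corner (hC : IsCheb S) (hS : IsClosed (S : Set A)) {h : A} (hh : h ∈ S)
    (hsa : IsSelfAdjoint h) {r p : ℝ} (hr : 0 < r) (hp : p ∈ spectrum ℝ h) {u w : A} (x : A)
    (hu : E h r p * u = 0) (hw : w * E h r p = 0) : u * x * w ∈ S := by
  apply hC.corner (e := E h r p) (g := E h (r / 2) p) (E_mem hS hh _ _)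
    (cfc_predicate _ _) _ (E_mem hS hh _ _) (cfc_predicate _ _) _ (E_sub (by linarith) (by linarith))
  · rw [mul_assoc, ← mul_assoc, hu, zero_mul]
  · rw [mul_assoc, hw, mul_zero]
  · unfold E
    rw [← cfc_one ℝ h, ← cfc_sub _ _ h]
    apply norm_cfc_le zero_le_one
    intro t _
    rw [Real.norm_eq_abs, abs_le]
    have := bump_nonneg r p t
    have := bump_le r p t
    constructor <;> simp <;> linarith
  · intro h0
    have := norm_apply_le_norm_cfc (bump (r / 2) p) h hp
    unfold E at h0
    rw [h0, bump_one (by linarith) (by simp; linarith)] at this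
    norm_num at this

lemma three (hC : IsCheb S) (hS : IsClosed (S : Set A)) {h : A} (hh : h ∈ S)
    (hsa : IsSelfAdjoint h) {a b c : ℝ} (ha : a ∈ spectrum ℝ h) (hb : b ∈ spectrum ℝ h)
    (hc : c ∈ spectrum ℝ h) (hab : a ≠ b) (hac : a ≠ c) (hbc : b ≠ c) (x : A) : x ∈ S := by
  obtain ⟨d, hd, h1, h2, h3⟩ : ∃ d : ℝ, 0 < d ∧ 4 * d ≤ |a - b| ∧ 4 * d ≤ |a - c| ∧
      4 * d ≤ |b - c| := by
    refine ⟨min (|a - b|) (min (|a - c|) (|b - c|)) / 4, ?_, ?_, ?_, ?_⟩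
    · have := abs_pos.2 (sub_ne_zero.2 hab)
      have := abs_pos.2 (sub_ne_zero.2 hac)
      have := abs_pos.2 (sub_ne_zero.2 hbc)
      positivity
    · have := min_le_left (|a - b|) (min (|a - c|) (|b - c|)); linarith
    · have := (min_le_right (|a - b|) (min (|a - c|) (|b - c|))).trans (min_le_left _ _); linarith
    · have := (min_le_right (|a - b|) (min (|a - c|) (|b - c|))).trans (min_le_right _ _); linarith
  have hd2 : 0 < d / 2 := by linarith
  have hd3 : d / 2 ≤ d := by linarith
  set u := E h d a with hu
  set v := E h d b with hv
  set w := 1 - u - v with hw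
  set ea := E h (d / 2) a with hea
  set eb := E h (d / 2) b with heb
  set ec := E h (d / 2) c with hec
  have uea : u * ea = ea := E_sub hd2 (by linarith)
  have veb : v * eb = eb := E_sub hd2 (by linarith)
  have ueb : u * eb = 0 := E_orth hd hd2 le_rfl hd3 h1
  have uec : u * ec = 0 := E_orth hd hd2 le_rfl hd3 h2
  have vea : v * ea = 0 := E_orth hd hd2 le_rfl hd3 (by rwa [abs_sub_comm])
  have vec : v * ec = 0 := E_orth hd hd2 le_rfl hd3 h3
  have wea : w * ea = 0 := by rw [hw, sub_mul, sub_mul, uea, vea]; simp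
  have web : w * eb = 0 := by rw [hw, sub_mul, sub_mul, ueb, veb]; simp
  have eau : ea * u = ea := by rw [hea, hu, E_comm]; exact uea
  have ebv : eb * v = eb := by rw [heb, hv, E_comm]; exact veb
  have ebu : eb * u = 0 := by rw [heb, hu, E_comm]; exact ueb
  have ecu : ec * u = 0 := by rw [hec, hu, E_comm]; exact uec
  have eav : ea * v = 0 := by rw [hea, hv, E_comm]; exact vea
  have ecv : ec * v = 0 := by rw [hec, hv, E_comm]; exact vec
  have eaw : ea * w = 0 := by rw [hw, mul_sub, mul_sub, eau, eav]; simp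
  have ebw : eb * w = 0 := by rw [hw, mul_sub, mul_sub, ebu, ebv]; simp
  have hx : x = u * x * u + u * x * v + v * x * u + v * x * v + u * x * w + w * x * u
      + w * x * w + v * x * w + w * x * v := by
    rw [hw]; noncomm_ring
  rw [hx]
  have La := fun {s t : A} => E_corner hC hS hh hsa hd2 ha (u := s) (w := t) x
  have Lb := fun {s t : A} => E_corner hC hS hh hsa hd2 hb (u := s) (w := t) x
  have Lc := fun {s t : A} => E_corner hC hS hh hsa hd2 hc (u := s) (w := t) x
  exact add_mem (add_mem (add_mem (add_mem (add_mem (add_mem (add_mem (add_mem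
    (Lc ecu uec) (Lc ecu vec)) (Lc ecv uec)) (Lc ecv vec)) (Lb ebu web)) (Lb ebw ueb))
    (Lb ebw web)) (La eav wea)) (La eaw vea)

lemma quad [Nontrivial A] (hC : IsCheb S) (hS : IsClosed (S : Set A)) (hT : ¬ ∀ x, x ∈ S) {h : A}
    (hh : h ∈ S) (hsa : IsSelfAdjoint h) :
    ∃ a b : ℝ, (h - algebraMap ℝ A a) * (h - algebraMap ℝ A b) = 0 := by
  obtain ⟨a, b, hab⟩ : ∃ a b : ℝ, ∀ t ∈ spectrum ℝ h, t = a ∨ t = b := by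
    by_contra! hcon
    obtain ⟨a, ha, -⟩ := hcon 0 0
    obtain ⟨b, hb, hba, -⟩ := hcon a a
    obtain ⟨c, hc, hca, hcb⟩ := hcon a b
    exact hT (three hC hS hh hsa ha hb hc hba.symm hca.symm hcb.symm)
  refine ⟨a, b, ?_⟩
  have e : ∀ s : ℝ, h - algebraMap ℝ A s = cfc (fun t => t - s) h := by
    intro s
    rw [cfc_sub _ _ h, cfc_id' ℝ h, cfc_const s h]
  rw [e, e, ← cfc_mul _ _ h, ← cfc_const_zero ℝ h]
  apply cfc_congr
  intro t ht
  rcases hab t ht with h | h <;> simp [h]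

lemma corner_scalar_sa [Nontrivial A] (hC : IsCheb S) (hS : IsClosed (S : Set A))
    (hT : ¬ ∀ x, x ∈ S) {p k : A} (hp : p ∈ S) (hpp : p * p = p) (hps : IsSelfAdjoint p)
    (hp1 : p ≠ 1) (hks : IsSelfAdjoint k) (hk : k ∈ S)
    (hpk : p * k = k) (hkp : k * p = k) : ∃ c : ℝ, k = c • p := by
  set q := 1 - p with hq
  have hqS : q ∈ S := sub_mem (one_mem S) hp
  have hqs : IsSelfAdjoint q := (IsSelfAdjoint.one A).sub hps
  have hq0 : q ≠ 0 := fun h => hp1 (sub_eq_zero.1 h).symm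
  have hpq : p * q = 0 := by rw [hq, mul_sub, hpp, mul_one, sub_self]
  have hqp : q * p = 0 := by rw [hq, sub_mul, hpp, one_mul, sub_self]
  have hqq : q * q = q := by rw [hq, mul_sub, ← hq, hqp, mul_one, sub_zero]
  have hqk : q * k = 0 := by rw [hq, sub_mul, hpk, one_mul, sub_self]
  have hkq : k * q = 0 := by rw [hq, mul_sub, hkp, mul_one, sub_self]
  have h1 : (1 : A) = p + q := by rw [hq]; abel
  clear_value q
  obtain ⟨M, hM⟩ : ∃ M : ℝ, M = ‖k‖ + 1 := ⟨_, rfl⟩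
  have hunit : IsUnit (M • (1 : A) - k) := by
    have : M ∈ resolventSet ℝ k := by
      apply spectrum.mem_resolventSet_of_norm_lt
      rw [Real.norm_of_nonneg (by rw [hM]; positivity)]
      linarith
    rwa [spectrum.mem_resolventSet_iff, Algebra.algebraMap_eq_smul_one] at this
  have hsS : k + M • q ∈ S := by
    apply add_mem hk
    have := S.smul_mem hqS (M : ℂ)
    rwa [Complex.coe_smul] at this
  have hss : IsSelfAdjoint (k + M • q) := hks.add (IsSelfAdjoint.smul (IsSelfAdjoint.all M) hqs)
  obtain ⟨a, b, hab⟩ := quad hC hS hT hsS hss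
  rw [Algebra.algebraMap_eq_smul_one, Algebra.algebraMap_eq_smul_one] at hab
  have H1 : (k - a • p) * (k - b • 1) = 0 := by
    have : p * ((k + M • q - a • 1) * (k + M • q - b • 1)) = (k - a • p) * (k - b • 1) := by
      simp only [mul_add, mul_sub, add_mul, sub_mul, mul_smul_comm, smul_mul_assoc, mul_one, one_mul,
        hpq, hpk, hkq, ← mul_assoc, smul_zero, zero_mul, mul_zero, add_zero, sub_zero]
    rw [← this, hab, mul_zero]
  have H2 : ((M - a) * (M - b)) • q = 0 := by
    have : q * ((k + M • q - a • 1) * (k + M • q - b • 1)) = ((M - a) * (M - b)) • q := by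
      simp only [mul_add, mul_sub, add_mul, sub_mul, mul_smul_comm, smul_mul_assoc, mul_one, one_mul,
        hqq, hqk, ← mul_assoc, smul_zero, zero_mul, mul_zero]
      module
    rw [← this, hab, mul_zero]
  rcases smul_eq_zero.1 H2 with h | h
  · rcases mul_eq_zero.1 h with h | h
    · have : a = M := by linarith
      subst this
      refine ⟨b, ?_⟩
      have h3 : (a • (1 : A) - k) * (k - b • p) = 0 := by
        have : (a • (1 : A) - k) * (k - b • p) = - ((k - a • p) * (k - b • 1)) * p := by
          simp only [mul_sub, sub_mul, mul_smul_comm, smul_mul_assoc, mul_one,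
            one_mul, hpk, hkp, hpp, smul_sub, mul_assoc, neg_mul]
          module
        rw [this, H1]; simp
      exact sub_eq_zero.1 ((hunit.mul_right_eq_zero).1 h3)
    · have : b = M := by linarith
      subst this
      refine ⟨a, ?_⟩
      have h3 : (k - a • p) * (b • (1 : A) - k) = 0 := by
        rw [← neg_sub k, mul_neg, H1, neg_zero]
      exact sub_eq_zero.1 ((hunit.mul_left_eq_zero).1 h3)
  · exact absurd h hq0

lemma corner_scalar [Nontrivial A] (hC : IsCheb S) (hS : IsClosed (S : Set A))
    (hT : ¬ ∀ x, x ∈ S) {p : A} (hp : p ∈ S) (hpp : p * p = p) (hps : IsSelfAdjoint p)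
    (hp1 : p ≠ 1) (x : A) : ∃ c : ℂ, p * x * p = c • p := by
  have hsa : ∀ k : A, IsSelfAdjoint k → ∃ c : ℝ, p * k * p = c • p := by
    intro k hk
    have h1 : p * (p * k * p) = p * k * p := by rw [← mul_assoc, ← mul_assoc, hpp]
    have h2 : (p * k * p) * p = p * k * p := by rw [mul_assoc, hpp]
    have hqS : 1 - p ∈ S := sub_mem (one_mem S) hp
    have hqs : IsSelfAdjoint (1 - p) := (IsSelfAdjoint.one A).sub hps
    have hqq : (1 - p) * (1 - p) = 1 - p := by
      rw [mul_sub, sub_mul, sub_mul, hpp]; simp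
    have hpn : ‖p‖ ≤ 1 := by
      have := CStarRing.norm_star_mul_self (x := p)
      rw [hps.star_eq, hpp] at this
      nlinarith [norm_nonneg p]
    apply corner_scalar_sa hC hS hT hp hpp hps hp1 _ _ h1 h2
    · rw [IsSelfAdjoint, star_mul, star_mul, hps.star_eq, hk.star_eq, mul_assoc]
    · apply hC.corner hqS hqs (by simpa using hpn) hqS hqs _ hqq
      · rw [sub_mul, h1, one_mul, sub_self]
      · rw [mul_sub, h2, mul_one, sub_self]
      · exact fun h => hp1 (sub_eq_zero.1 h).symm
  obtain ⟨a, ha⟩ := hsa _ (realPart x).2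
  obtain ⟨b, hb⟩ := hsa _ (imaginaryPart x).2
  refine ⟨a + b * Complex.I, ?_⟩
  conv_lhs => rw [← realPart_add_I_smul_imaginaryPart x]
  rw [mul_add, add_mul, ha, mul_smul_comm, smul_mul_assoc, hb, add_smul, ← Complex.coe_smul a,
    ← Complex.coe_smul b, smul_smul, mul_comm Complex.I]

/-- data of a 2x2 matrix unit system -/
lemma matrix_iso {p q v : A} (hp : star p = p) (hq : star q = q)
    (hpp : p * p = p) (hpq1 : p + q = 1) (hvv : v * star v = p) (hvv' : star v * v = q)
    (hv0 : v ≠ 0)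
    (hspan : ∀ x : A, ∃ a b c d : ℂ, x = a • p + b • v + c • star v + d • q) :
    ∃ ψ : Matrix (Fin 2) (Fin 2) ℂ ≃⋆ₐ[ℂ] A,
      ∀ m, ψ m = m 0 0 • p + m 0 1 • v + m 1 0 • star v + m 1 1 • q := by
  have hq' : q = 1 - p := by rw [← hpq1]; abel
  have hpq : p * q = 0 := by rw [hq', mul_sub, hpp, mul_one, sub_self]
  have hqp : q * p = 0 := by rw [hq', sub_mul, hpp, one_mul, sub_self]
  have hqq : q * q = q := by nth_rw 1 [hq']; rw [sub_mul, hpq, one_mul, sub_zero]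
  have hqv : q * v = 0 := by
    have : (q * v) * star (q * v) = 0 := by
      rw [star_mul, hq, mul_assoc, ← mul_assoc v, hvv, hpq, mul_zero]
    exact (CStarRing.mul_star_self_eq_zero_iff _).1 this
  have hvp : v * p = 0 := by
    have : star (v * p) * (v * p) = 0 := by
      rw [star_mul, hp, mul_assoc, ← mul_assoc (star v), hvv', hqp, mul_zero]
    exact (CStarRing.star_mul_self_eq_zero_iff _).1 this
  have hpv : p * v = v := by
    have : (p + q) * v = v := by rw [hpq1, one_mul]
    rwa [add_mul, hqv, add_zero] at this
  have hvq : v * q = v := by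
    have : v * (p + q) = v := by rw [hpq1, mul_one]
    rwa [mul_add, hvp, zero_add] at this
  have hvsq : star v * q = 0 := by simpa [hq] using congrArg star hqv
  have hpvs : p * star v = 0 := by simpa [hp] using congrArg star hvp
  have hvsp : star v * p = star v := by simpa [hp] using congrArg star hpv
  have hqvs : q * star v = star v := by simpa [hq] using congrArg star hvq
  have hvv0 : v * v = 0 := by nth_rw 2 [← hpv]; rw [← mul_assoc, hvp, zero_mul]
  have hvsvs : star v * star v = 0 := by simpa using congrArg star hvv0
  let ψ : Matrix (Fin 2) (Fin 2) ℂ →⋆ₐ[ℂ] A :=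
    { toFun := fun m => m 0 0 • p + m 0 1 • v + m 1 0 • star v + m 1 1 • q
      map_one' := by simp [hpq1]
      map_zero' := by simp
      map_mul' := by
        intro m n
        simp only [Matrix.mul_apply, Fin.sum_univ_two, mul_add, add_mul, smul_mul_assoc,
          mul_smul_comm, hpp, hpq, hqp, hqq, hqv, hvp, hpv, hvq, hvsq, hpvs, hvsp, hqvs, hvv0, hvsvs,
          hvv, hvv', smul_zero]
        module
      map_add' := by
        intro m n
        simp only [Matrix.add_apply]
        module
      commutes' := by
        intro c
        simp only [Matrix.algebraMap_matrix_apply]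
        simp [Algebra.algebraMap_eq_smul_one, ← hpq1]
      map_star' := by
        intro m
        simp [Matrix.star_apply, hp, hq]
        abel }
  have hψ : ∀ m, ψ m = m 0 0 • p + m 0 1 • v + m 1 0 • star v + m 1 1 • q := fun m => rfl
  have hp0 : p ≠ 0 := by rintro rfl; apply hv0; rw [← hpv, zero_mul]
  have hq0 : q ≠ 0 := by rintro rfl; apply hv0; rw [← hvq, mul_zero]
  have hvs0 : star v ≠ 0 := by simpa using hv0
  have hbij : Function.Bijective ψ := by
    constructor
    · rw [injective_iff_map_eq_zero]
      intro m hm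
      rw [hψ] at hm
      have e1 : m 0 0 • p = 0 := by
        have := congrArg (fun t => p * t * p) hm
        simpa [mul_add, add_mul, hpp, hpq, hpv, hvp, hpvs] using this
      have e2 : m 0 1 • v = 0 := by
        have := congrArg (fun t => p * t * q) hm
        simpa [mul_add, add_mul, hpp, hpq, hpv, hvq, hpvs] using this
      have e3 : m 1 0 • star v = 0 := by
        have := congrArg (fun t => q * t * p) hm
        simpa [mul_add, add_mul, hqp, hqv, hqvs, hvsp, hqq] using this
      have e4 : m 1 1 • q = 0 := by
        have := congrArg (fun t => q * t * q) hm
        simpa [mul_add, add_mul, hqp, hqv, hqvs, hvsq, hqq] using this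
      ext i j
      fin_cases i <;> fin_cases j
      · simpa [hp0] using e1
      · simpa [hv0] using e2
      · simpa [hv0] using e3
      · simpa [hq0] using e4
    · intro x
      obtain ⟨a, b, c, d, h⟩ := hspan x
      exact ⟨!![a, b; c, d], by rw [hψ, h]; simp⟩
  exact ⟨StarAlgEquiv.ofBijective ψ hbij, hψ⟩

lemma final [Nontrivial A] (hC : IsCheb S) (hS : IsClosed (S : Set A))
    (hT : ¬ ∀ x, x ∈ S) (hsc : ¬ ∀ x ∈ S, ∃ c : ℂ, x = c • 1) :
    ∃ φ : A ≃⋆ₐ[ℂ] Matrix (Fin 2) (Fin 2) ℂ,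
      φ '' (S : Set A) = {m : Matrix (Fin 2) (Fin 2) ℂ | ∀ i j, i ≠ j → m i j = 0} := by
  obtain ⟨h, hh, hsa, hns⟩ : ∃ h ∈ S, IsSelfAdjoint h ∧ ∀ c : ℝ, h ≠ c • (1 : A) := by
    by_contra! hcon
    apply hsc
    intro x hx
    have hr : (realPart x : A) ∈ S := by
      rw [realPart_apply_coe, ← Complex.coe_smul]
      exact S.smul_mem (add_mem hx (star_mem hx)) _
    have hi : (imaginaryPart x : A) ∈ S := by
      rw [imaginaryPart_apply_coe, ← Complex.coe_smul (_ : ℝ)]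
      exact S.smul_mem (S.smul_mem (sub_mem hx (star_mem hx)) _) _
    obtain ⟨a, ha⟩ := hcon _ hr (realPart x).2
    obtain ⟨b, hb⟩ := hcon _ hi (imaginaryPart x).2
    refine ⟨a + b * Complex.I, ?_⟩
    rw [← realPart_add_I_smul_imaginaryPart x, ha, hb, add_smul, ← Complex.coe_smul a,
      ← Complex.coe_smul b, smul_smul, mul_comm Complex.I]
  obtain ⟨a, b, hab⟩ := quad hC hS hT hh hsa
  rw [Algebra.algebraMap_eq_smul_one, Algebra.algebraMap_eq_smul_one] at hab
  have hne : b - a ≠ 0 := by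
    intro h0
    have : b = a := by linarith
    subst this
    have hs : IsSelfAdjoint (h - b • (1 : A)) :=
      hsa.sub (IsSelfAdjoint.smul (IsSelfAdjoint.all b) (IsSelfAdjoint.one A))
    have h2 : star (h - b • (1 : A)) * (h - b • (1 : A)) = 0 := by rw [hs.star_eq, hab]
    exact hns b (sub_eq_zero.1 ((CStarRing.star_mul_self_eq_zero_iff _).1 h2))
  obtain ⟨p, hpdef⟩ : ∃ p : A, p = (b - a)⁻¹ • (h - a • (1 : A)) := ⟨_, rfl⟩
  have hha : h = a • (1 : A) + (b - a) • p := by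
    rw [hpdef, smul_smul, mul_inv_cancel₀ hne, one_smul]; abel
  have hp : p ∈ S := by
    rw [hpdef, ← Complex.coe_smul, ← Complex.coe_smul a]
    exact S.smul_mem (sub_mem hh (S.smul_mem (one_mem S) _)) _
  have hps : IsSelfAdjoint p := by
    rw [hpdef]
    exact IsSelfAdjoint.smul (IsSelfAdjoint.all _)
      (hsa.sub (IsSelfAdjoint.smul (IsSelfAdjoint.all a) (IsSelfAdjoint.one A)))
  have hpp : p * p = p := by
    have e : (h - a • (1 : A)) * (h - b • (1 : A)) = ((b - a) * (b - a)) • (p * p - p) := by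
      rw [hha]
      simp only [mul_add, mul_sub, add_mul, sub_mul, mul_smul_comm, smul_mul_assoc, mul_one, one_mul]
      module
    rw [e] at hab
    exact sub_eq_zero.1 ((smul_eq_zero.1 hab).resolve_left (mul_ne_zero hne hne))
  have hp1 : p ≠ 1 := by
    rintro rfl
    apply hns b
    rw [hha]; module
  have hp0 : p ≠ 0 := by
    rintro rfl
    apply hns a
    rw [hha]; simp
  obtain ⟨q, hqdef⟩ : ∃ q : A, q = 1 - p := ⟨_, rfl⟩
  have hq : q ∈ S := by rw [hqdef]; exact sub_mem (one_mem S) hp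
  have hqs : IsSelfAdjoint q := by rw [hqdef]; exact (IsSelfAdjoint.one A).sub hps
  have hpq1 : p + q = 1 := by rw [hqdef]; abel
  have hpq : p * q = 0 := by rw [hqdef, mul_sub, hpp, mul_one, sub_self]
  have hqp : q * p = 0 := by rw [hqdef, sub_mul, hpp, one_mul, sub_self]
  have hqq : q * q = q := by nth_rw 1 [hqdef]; rw [sub_mul, hpq, one_mul, sub_zero]
  have hq1 : q ≠ 1 := by
    intro h; apply hp0; rw [hqdef] at h; simpa using h
  have hq0 : q ≠ 0 := by
    intro h; apply hp1; rw [hqdef] at h; exact (sub_eq_zero.1 h).symm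
  have P := corner_scalar hC hS hT hp hpp hps hp1
  have Q := corner_scalar hC hS hT hq hqq hqs hq1
  have dec : ∀ x : A, x = p * x * p + p * x * q + q * x * p + q * x * q := by
    intro x; rw [hqdef]; noncomm_ring
  obtain ⟨w, hw⟩ : ∃ w, p * w * q ≠ 0 := by
    by_contra! hcon
    apply hT
    intro x
    have h2 : q * x * p = 0 := by
      have := congrArg star (hcon (star x))
      simpa [hps.star_eq, hqs.star_eq, mul_assoc] using this
    rw [dec x, hcon, h2]
    obtain ⟨c, hc⟩ := P x
    obtain ⟨d, hd⟩ := Q x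
    rw [hc, hd]
    simpa using add_mem (S.smul_mem hp c) (S.smul_mem hq d)
  set u := p * w * q with hu
  have hpu : p * u = u := by rw [hu, ← mul_assoc, ← mul_assoc, hpp]
  have huq : u * q = u := by rw [hu, mul_assoc, hqq]
  have hpus : star u * p = star u := by simpa [hps.star_eq] using congrArg star hpu
  have huqs : q * star u = star u := by simpa [hqs.star_eq] using congrArg star huq
  clear_value u
  have hu0 : ‖u‖ ≠ 0 := norm_ne_zero_iff.2 hw
  have pn : ‖p‖ = 1 := by
    have := CStarRing.norm_star_mul_self (x := p)
    rw [hps.star_eq, hpp] at this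
    have h0 : ‖p‖ ≠ 0 := norm_ne_zero_iff.2 hp0
    exact (mul_right_cancel₀ h0 (by linarith)).symm
  have qn : ‖q‖ = 1 := by
    have := CStarRing.norm_star_mul_self (x := q)
    rw [hqs.star_eq, hqq] at this
    have h0 : ‖q‖ ≠ 0 := norm_ne_zero_iff.2 hq0
    exact (mul_right_cancel₀ h0 (by linarith)).symm
  let _ := CStarAlgebra.spectralOrder A
  have := CStarAlgebra.spectralOrderedRing A
  have scal : ∀ (e y : A) (c : ℂ), IsSelfAdjoint e → e * e = e → ‖e‖ = 1 →
      y * star y = c • e → c = ((‖y‖ * ‖y‖ : ℝ) : ℂ) := by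
    intro e y c hes hee hen hy
    have he0 : e ≠ 0 := by rintro rfl; simp at hen
    have hn : ‖c‖ = ‖y‖ * ‖y‖ := by
      rw [← CStarRing.norm_self_mul_star, hy, norm_smul, hen, mul_one]
    have hconj : star c = c := by
      have h1 := congrArg star hy
      rw [star_mul, star_star, hy, star_smul, hes.star_eq] at h1
      exact (smul_left_injective ℂ he0 h1).symm
    obtain ⟨r, rfl⟩ := Complex.conj_eq_iff_real.1 hconj
    rw [Complex.norm_real, Real.norm_eq_abs] at hn
    rw [← hn]
    rcases le_total 0 r with h | h
    · rw [abs_of_nonneg h]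
    · have h2 : y * star y = - (star ((‖y‖ : ℂ) • e) * ((‖y‖ : ℂ) • e)) := by
        rw [abs_of_nonpos h] at hn
        have hr : r = - (‖y‖ * ‖y‖) := by linarith
        rw [hy, star_smul, hes.star_eq, smul_mul_smul_comm, hee, hr]
        simp
      have h3 : y * star y = 0 :=
        le_antisymm (by rw [h2]; exact neg_nonpos.2 (star_mul_self_nonneg _))
          (mul_star_self_nonneg y)
      have h4 : ‖y‖ = 0 := by
        rw [(CStarRing.mul_star_self_eq_zero_iff y).1 h3, norm_zero]
      rw [h4, mul_zero, abs_eq_zero] at hn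
      simp [hn]
  obtain ⟨c, hc⟩ := P (u * star u)
  have hc' : u * star u = c • p := by
    rw [← hc, ← mul_assoc, hpu, mul_assoc, hpus]
  obtain ⟨d, hd⟩ := Q (star u * u)
  have hd' : star u * u = d • q := by
    rw [← hd, ← mul_assoc, huqs, mul_assoc, huq]
  have hcv := scal p u c hps hpp pn hc'
  have hdv := scal q (star u) d hqs hqq qn (by rw [star_star, hd'])
  rw [norm_star] at hdv
  obtain ⟨v, hv⟩ : ∃ v : A, v = ((‖u‖⁻¹ : ℝ) : ℂ) • u := ⟨_, rfl⟩
  have hsv : star v = ((‖u‖⁻¹ : ℝ) : ℂ) • star u := by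
    rw [hv, star_smul]; simp
  have hone : ((‖u‖⁻¹ : ℝ) : ℂ) * (((‖u‖⁻¹ : ℝ) : ℂ) * ((‖u‖ * ‖u‖ : ℝ) : ℂ)) = 1 := by
    rw [← Complex.ofReal_mul, ← Complex.ofReal_mul]
    have : ‖u‖⁻¹ * (‖u‖⁻¹ * (‖u‖ * ‖u‖)) = 1 := by field_simp
    rw [this, Complex.ofReal_one]
  have hvv : v * star v = p := by
    rw [hsv, hv, smul_mul_smul_comm, hc', hcv, smul_smul, mul_assoc, hone, one_smul]
  have hvv' : star v * v = q := by
    rw [hsv, hv, smul_mul_smul_comm, hd', hdv, smul_smul, mul_assoc, hone, one_smul]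
  have hv0 : v ≠ 0 := by
    rintro rfl; apply hp0; rw [← hvv]; simp
  have hpv : p * v = v := by rw [hv, mul_smul_comm, hpu]
  have hvq : v * q = v := by rw [hv, smul_mul_assoc, huq]
  have hvsp : star v * p = star v := by simpa [hps.star_eq] using congrArg star hpv
  have hqvs : q * star v = star v := by simpa [hqs.star_eq] using congrArg star hvq
  have hpvs : p * star v = 0 := by rw [← hqvs, ← mul_assoc, hpq, zero_mul]
  have hqv : q * v = 0 := by rw [← hpv, ← mul_assoc, hqp, zero_mul]
  have hvp : v * p = 0 := by rw [← hvq, mul_assoc, hqp, mul_zero]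
  have hvsq : star v * q = 0 := by rw [← hvsp, mul_assoc, hpq, mul_zero]
  have pq : ∀ x, ∃ c : ℂ, p * x * q = c • v := by
    intro x
    obtain ⟨c, hc⟩ := P (x * star v)
    refine ⟨c, ?_⟩
    have : p * (x * star v) * p * v = p * x * q := by
      rw [mul_assoc _ p v, hpv, ← mul_assoc, mul_assoc, hvv']
    rw [← this, hc, smul_mul_assoc, hpv]
  have hspan : ∀ x : A, ∃ a b c d : ℂ, x = a • p + b • v + c • star v + d • q := by
    intro x
    obtain ⟨a, ha⟩ := P x
    obtain ⟨b, hb⟩ := pq x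
    obtain ⟨c, hc⟩ := pq (star x)
    obtain ⟨d, hd⟩ := Q x
    refine ⟨a, b, star c, d, ?_⟩
    have h2 : q * x * p = star c • star v := by
      have := congrArg star hc
      simpa [hps.star_eq, hqs.star_eq, mul_assoc] using this
    rw [← ha, ← hb, ← h2, ← hd]
    exact dec x
  have hvS : v ∉ S := by
    intro hvS
    apply hT
    intro x
    obtain ⟨a, b, c, d, h⟩ := hspan x
    rw [h]
    exact add_mem (add_mem (add_mem (S.smul_mem hp _) (S.smul_mem hvS _))
      (S.smul_mem (star_mem hvS) _)) (S.smul_mem hq _)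
  have hvsS : star v ∉ S := fun h => hvS (by simpa using star_mem h)
  obtain ⟨ψ, hψ⟩ := matrix_iso hps.star_eq hqs.star_eq hpp hpq1 hvv hvv' hv0 hspan
  have hmem : ∀ m, ψ m ∈ S ↔ ∀ i j, i ≠ j → m i j = 0 := by
    intro m
    constructor
    · intro hm
      have e2 : p * ψ m * q = m 0 1 • v := by
        rw [hψ]
        simp [mul_add, add_mul, hpp, hpq, hpv, hvq, hpvs]
      have e3 : q * ψ m * p = m 1 0 • star v := by
        rw [hψ]
        simp [mul_add, add_mul, hqp, hqv, hqvs, hvsp, hqq]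
      have z2 : m 0 1 = 0 := by
        by_contra h0
        apply hvS
        have := S.smul_mem (e2 ▸ mul_mem (mul_mem hp hm) hq) (m 0 1)⁻¹
        rwa [smul_smul, inv_mul_cancel₀ h0, one_smul] at this
      have z3 : m 1 0 = 0 := by
        by_contra h0
        apply hvsS
        have := S.smul_mem (e3 ▸ mul_mem (mul_mem hq hm) hp) (m 1 0)⁻¹
        rwa [smul_smul, inv_mul_cancel₀ h0, one_smul] at this
      intro i j hij
      fin_cases i <;> fin_cases j
      · exact absurd rfl hij
      · exact z2
      · exact z3
      · exact absurd rfl hij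
    · intro hm
      rw [hψ, hm 0 1 (by simp), hm 1 0 (by simp)]
      simpa using add_mem (S.smul_mem hp _) (S.smul_mem hq _)
  refine ⟨ψ.symm, ?_⟩
  ext m
  simp only [Set.mem_image, Set.mem_ofPred_eq, ← hmem]
  constructor
  · rintro ⟨x, hx, rfl⟩
    simpa using hx
  · intro hm
    exact ⟨ψ m, hm, by simp⟩

end Cheb



/-- Let `A` be a unital C*-algebra and `B` a nonzero norm-closed
*-subalgebra of `A` which is a Chebyshev subspace of `A`. Then `B = A`, or
`B = ℂ·1`, or there is a *-algebra isomorphism `φ : A ≃ M₂(ℂ)` carrying `B` onto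
the diagonal matrices. -/
theorem cebysev_subalgebra_trichotomy
    {A : Type*} [NormedRing A] [StarRing A] [CStarRing A]
    [NormedAlgebra ℂ A] [StarModule ℂ A] [CompleteSpace A]
    (B : NonUnitalStarSubalgebra ℂ A) (hBclosed : IsClosed (B : Set A))
    (hB0 : B ≠ ⊥)
    (hCheb : ∀ x : A, ∃! v : A, v ∈ B ∧ ‖x - v‖ = Metric.infDist x (B : Set A)) :
    B = ⊤ ∨
    (B : Set A) = Set.range (fun c : ℂ => c • (1 : A)) ∨
    ∃ φ : A ≃⋆ₐ[ℂ] Matrix (Fin 2) (Fin 2) ℂ,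
      φ '' (B : Set A) = {m : Matrix (Fin 2) (Fin 2) ℂ | ∀ i j, i ≠ j → m i j = 0} := by
  let _ : CStarAlgebra A := { }
  obtain ⟨b, hb, hb0⟩ : ∃ b ∈ B, b ≠ 0 := by
    by_contra! hcon
    apply hB0
    ext x
    simp only [NonUnitalStarAlgebra.mem_bot]
    exact ⟨hcon x, fun h => h ▸ zero_mem B⟩
  have : Nontrivial A := ⟨b, 0, hb0⟩
  have h1 := Cheb.unit_mem B hBclosed hB0 hCheb
  let S : StarSubalgebra ℂ A :=
    { B with
      one_mem' := h1
      algebraMap_mem' := fun r => by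
        rw [Algebra.algebraMap_eq_smul_one]
        exact SMulMemClass.smul_mem (s := B) r h1 }
  have hSB : (S : Set A) = B := rfl
  have hC : Cheb.IsCheb S := hCheb
  by_cases hT : ∀ x, x ∈ S
  · left
    ext x
    exact ⟨fun _ => trivial, fun _ => hT x⟩
  right
  by_cases hsc : ∀ x ∈ S, ∃ c : ℂ, x = c • 1
  · left
    ext x
    constructor
    · intro hx
      obtain ⟨c, hc⟩ := hsc x hx
      exact ⟨c, hc.symm⟩
    · rintro ⟨c, rfl⟩
      exact SMulMemClass.smul_mem (s := B) c h1
  right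
  exact Cheb.final hC hBclosed hT hsc
end

section
/- Let A be a C*-algebra, let F be a JB*-subtriple of A which is a Chebyshev subspace of A, and let e be a nonzero tripotent in F. Then A₀(e) = F₀(e), i.e., {x ∈ A : e e* x = 0 = x e* e} ⊆ F; consequently, every complete tripotent of F is a complete tripotent of A. -/
theorem norm_sub_proj_mul_le {A : Type*} [NonUnitalNormedRing A] [StarRing A] [CStarRing A]
    {p : A} (hs : star p = p) (h2 : p * p = p) (y : A) : ‖y - p * y‖ ≤ ‖y‖ := by
  have h : star (y - p * y) * (y - p * y) = star y * (y - p * y) := by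
    have : p * (y - p * y) = 0 := by rw [mul_sub, ← mul_assoc, h2, sub_self]
    rw [star_sub, star_mul, hs, sub_mul, mul_assoc, this, mul_zero, sub_zero]
  have h3 := CStarRing.norm_star_mul_self (x := y - p * y)
  rw [h] at h3
  have h4 := norm_mul_le (star y) (y - p * y)
  rw [h3, norm_star] at h4
  by_contra! hlt
  nlinarith [norm_nonneg y]

theorem norm_sub_mul_proj_le {A : Type*} [NonUnitalNormedRing A] [StarRing A] [CStarRing A]
    {p : A} (hs : star p = p) (h2 : p * p = p) (y : A) : ‖y - y * p‖ ≤ ‖y‖ := by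
  have := norm_sub_proj_mul_le hs h2 (star y)
  rw [← norm_star, star_sub, star_mul, hs]
  simpa using this

theorem norm_add_pow_le_of_orth {A : Type*} [NonUnitalNormedRing A] [StarRing A] [CStarRing A]
    (n : ℕ) : ∀ (a b : A) (M : ℝ), ‖a‖ ≤ M → ‖b‖ ≤ M → star a * b = 0 → a * star b = 0 →
      ‖a + b‖ ^ (2 ^ n) ≤ 2 * M ^ (2 ^ n) := by
  induction n with
  | zero =>
    intro a b M ha hb _ _
    have := norm_add_le a b
    simp only [pow_zero, pow_one]
    linarith
  | succ n ih =>
    intro a b M ha hb h1 h2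
    have h1' : star b * a = 0 := by simpa using congrArg star h1
    have hsum : star (a + b) * (a + b) = star a * a + star b * b := by
      rw [star_add, add_mul, mul_add, mul_add, h1, h1', add_zero, zero_add]
    have hn : ‖a + b‖ ^ 2 = ‖star a * a + star b * b‖ := by
      rw [← hsum, CStarRing.norm_star_mul_self, sq]
    have := ih (star a * a) (star b * b) (M ^ 2)
      (by rw [CStarRing.norm_star_mul_self]; nlinarith [norm_nonneg a])
      (by rw [CStarRing.norm_star_mul_self]; nlinarith [norm_nonneg b])
      (by rw [star_mul, star_star, mul_assoc, ← mul_assoc a, h2, zero_mul, mul_zero])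
      (by rw [star_mul, star_star, mul_assoc, ← mul_assoc a, h2, zero_mul, mul_zero])
    rw [← hn, ← pow_mul, ← pow_mul] at this
    rwa [pow_succ', ]

theorem norm_add_le_of_orth {A : Type*} [NonUnitalNormedRing A] [StarRing A] [CStarRing A]
    (a b : A) {M : ℝ} (ha : ‖a‖ ≤ M) (hb : ‖b‖ ≤ M) (h1 : star a * b = 0)
    (h2 : a * star b = 0) : ‖a + b‖ ≤ M := by
  have hM : 0 ≤ M := (norm_nonneg a).trans ha
  rcases hM.eq_or_lt with h0 | hpos
  · have := norm_add_le a b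
    linarith
  by_contra! hlt
  have hr : 1 < ‖a + b‖ / M := (one_lt_div hpos).2 hlt
  obtain ⟨n, hn⟩ := pow_unbounded_of_one_lt 2 hr
  have h3 : (‖a + b‖ / M) ^ n ≤ (‖a + b‖ / M) ^ (2 ^ n) :=
    pow_le_pow_right₀ hr.le Nat.lt_two_pow_self.le
  have h4 : (‖a + b‖ / M) ^ (2 ^ n) ≤ 2 := by
    rw [div_pow, div_le_iff₀ (by positivity)]
    exact norm_add_pow_le_of_orth n a b M ha hb h1 h2
  linarith

/-- Let `A` be a C*-algebra, `F` a JB*-subtriple of `A` which is a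
Chebyshev subspace of `A`, and `e` a nonzero tripotent (partial isometry) in `F`.
Then `A₀(e) ⊆ F` (so `A₀(e) = F₀(e)`); consequently, every complete tripotent of
`F` is a complete tripotent of `A`. -/
theorem peirce_zero_eq_of_cebysev
    {A : Type*} [NonUnitalNormedRing A] [StarRing A] [CStarRing A]
    [NormedSpace ℂ A] [IsScalarTower ℂ A A] [SMulCommClass ℂ A A]
    [StarModule ℂ A] [CompleteSpace A]
    (F : Submodule ℂ A) (hFclosed : IsClosed (F : Set A))
    (hFtriple : ∀ x ∈ F, ∀ y ∈ F, ∀ z ∈ F,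
      (2 : ℂ)⁻¹ • (x * star y * z + z * star y * x) ∈ F)
    (hCheb : ∀ x : A, ∃! v : A, v ∈ F ∧ ‖x - v‖ = Metric.infDist x (F : Set A))
    (e : A) (he : e ∈ F) (he0 : e ≠ 0) (htrip : e * star e * e = e) :
    ({x : A | e * star e * x = 0 ∧ x * star e * e = 0} ⊆ (F : Set A)) ∧
    ((∀ y ∈ F, e * star e * y = 0 → y * star e * e = 0 → y = 0) →
      ∀ x : A, e * star e * x = 0 → x * star e * e = 0 → x = 0) := by
  have key : ∀ x : A, e * star e * x = 0 → x * star e * e = 0 → x ∈ F := by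
    intro x hx1 hx2
    have hstar : star e * e * star e = star e := by
      have := congrArg star htrip
      simpa [mul_assoc] using this
    have hp2 : e * star e * (e * star e) = e * star e := by
      rw [← mul_assoc, htrip]
    have hq2 : star e * e * (star e * e) = star e * e := by
      rw [← mul_assoc, hstar]
    have hps : star (e * star e) = e * star e := by simp
    have hqs : star (star e * e) = star e * e := by simp
    obtain ⟨v, ⟨hvF, hvd⟩, huniq⟩ := hCheb x
    have best : ∀ w ∈ F, ‖x - w‖ ≤ ‖x - v‖ → w = v := by
      intro w hw hle
      refine huniq w ⟨hw, le_antisymm (hle.trans hvd.le) ?_⟩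
      rw [← dist_eq_norm]
      exact Metric.infDist_le_dist_of_mem hw
    have hne : ‖e‖ ≤ 1 := by
      have h1 : ‖star e * e‖ = ‖star e * e‖ * ‖star e * e‖ := by
        have := CStarRing.norm_star_mul_self (x := star e * e)
        rwa [hqs, hq2] at this
      have h2 := CStarRing.norm_star_mul_self (x := e)
      by_contra! h
      have h3 : 1 < ‖star e * e‖ := by rw [h2]; nlinarith
      nlinarith
    have hL : (e * star e * v + v * (star e * e)) ∈ F := by
      have := F.smul_mem 2 (hFtriple e he e he v hvF)
      rw [smul_smul] at this
      simpa [mul_assoc] using this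
    have hQ : ∀ y ∈ F, e * star y * e ∈ F := by
      intro y hy
      have := hFtriple e he y hy e he
      rwa [← two_smul ℂ (e * star y * e), smul_smul, inv_mul_cancel₀ two_ne_zero, one_smul] at this
    have hQ2 : e * star e * v * (star e * e) ∈ F := by
      have := hQ _ (hQ v hvF)
      simpa [mul_assoc] using this
    set p := e * star e with hp
    set q := star e * e with hq
    have hxq : x * q = 0 := by rw [hq, ← mul_assoc]; exact hx2
    set z := (v - p * v) - (v - p * v) * q with hz
    have hzF : z ∈ F := by
      have : z = v - (p * v + v * q) + p * v * q := by rw [hz]; noncomm_ring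
      rw [this]
      exact F.add_mem (F.sub_mem hvF hL) hQ2
    have hzv : z = v := by
      apply best z hzF
      have : x - z = ((x - v) - p * (x - v)) - ((x - v) - p * (x - v)) * q := by
        rw [hz]
        simp only [mul_sub, sub_mul, mul_assoc, hx1, hxq, zero_mul]
        abel
      rw [this]
      exact (norm_sub_mul_proj_le hqs hq2 _).trans (norm_sub_proj_mul_le hps hp2 _)
    have hpv : p * v = 0 := by
      rw [← hzv, hz]
      simp only [mul_sub, sub_mul, ← mul_assoc, hp2]
      simp
    have hvq : v * q = 0 := by
      rw [← hzv, hz]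
      simp only [sub_mul, mul_assoc, hq2]
      simp
    set a := x - v with ha
    have hpa : p * a = 0 := by rw [ha, mul_sub, hx1, hpv, sub_zero]
    have haq : a * q = 0 := by rw [ha, sub_mul, hxq, hvq, sub_zero]
    have hea : star e * a = 0 := by
      rw [← hstar, hq, mul_assoc (star e) e, mul_assoc (star e), ← hp, hpa, mul_zero]
    have hae : a * star e = 0 := by
      rw [← hstar, ← mul_assoc, haq, zero_mul]
    have hae' : star a * e = 0 := by
      have := congrArg star hea
      simpa using this
    have hfin : v + ((‖a‖ : ℝ) : ℂ) • e = v := by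
      apply best _ (F.add_mem hvF (F.smul_mem _ he))
      have : x - (v + ((‖a‖ : ℝ) : ℂ) • e) = a + (-((‖a‖ : ℝ) : ℂ)) • e := by
        rw [ha, neg_smul]; abel
      rw [this]
      apply norm_add_le_of_orth _ _ le_rfl
      · rw [norm_smul, norm_neg, Complex.norm_real, norm_norm]
        exact mul_le_of_le_one_right (norm_nonneg _) hne
      · rw [mul_smul_comm, hae', smul_zero]
      · rw [star_smul, mul_smul_comm, hae, smul_zero]
    have h0 : ((‖a‖ : ℝ) : ℂ) • e = 0 := by simpa using hfin
    have ha0 : a = 0 := by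
      rcases smul_eq_zero.mp h0 with h | h
      · simpa using h
      · exact absurd h he0
    rw [sub_eq_zero.mp ha0]
    exact hvF
  exact ⟨fun x hx => key x hx.1 hx.2, fun h x h1 h2 => h x (key x h1 h2) h1 h2⟩
end

section
/- Let A be a C*-algebra, let F be a JB*-subtriple of A which is a Chebyshev subspace of A, and let e be a nonzero tripotent in F. If F₀(e) ≠ {0}, then A₂(e) = F₂(e), i.e., {x ∈ A : e e* x = x = x e* e} ⊆ F. -/
/-- Norm bound for a sum of two orthogonal elements of a C*-algebra. -/
theorem norm_sub_le_of_orthogonal {A : Type*} [NonUnitalNormedRing A] [StarRing A] [CStarRing A]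
    [NormedSpace ℂ A] [IsScalarTower ℂ A A] [SMulCommClass ℂ A A]
    [StarModule ℂ A] [CompleteSpace A] (a b : A) (h1 : star a * b = 0) (h2 : a * star b = 0)
    (hab : ‖b‖ ≤ ‖a‖) : ‖a - b‖ ≤ ‖a‖ := by
  letI : NonUnitalCStarAlgebra A := { }
  have h1' : star b * a = 0 := by
    have := congrArg star h1
    simpa using this
  have hs : star (a - b) * (a - b) = star a * a + star b * b := by
    simp only [star_sub, sub_mul, mul_sub, h1, h1']
    abel
  have hz : (star a * a) * (star b * b) = 0 := by
    rw [mul_assoc, ← mul_assoc a, h2, zero_mul, mul_zero]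
  have hn := IsSelfAdjoint.norm_add_eq_max (IsSelfAdjoint.star_mul_self a)
    (IsSelfAdjoint.star_mul_self b) hz
  rw [← hs, CStarRing.norm_star_mul_self, CStarRing.norm_star_mul_self,
    CStarRing.norm_star_mul_self,
    max_eq_left (mul_self_le_mul_self (norm_nonneg b) hab)] at hn
  exact le_of_eq ((mul_self_inj (norm_nonneg _) (norm_nonneg _)).mp hn)

/-- Let `A` be a C*-algebra, `F` a JB*-subtriple of `A` which is a
Chebyshev subspace of `A`, and `e` a nonzero tripotent (partial isometry) in `F`.
If `F₀(e) ≠ {0}`, then `A₂(e) ⊆ F` (so `A₂(e) = F₂(e)`). -/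
theorem peirce_two_eq_of_cebysev
    {A : Type*} [NonUnitalNormedRing A] [StarRing A] [CStarRing A]
    [NormedSpace ℂ A] [IsScalarTower ℂ A A] [SMulCommClass ℂ A A]
    [StarModule ℂ A] [CompleteSpace A]
    (F : Submodule ℂ A) (hFclosed : IsClosed (F : Set A))
    (hFtriple : ∀ x ∈ F, ∀ y ∈ F, ∀ z ∈ F,
      (2 : ℂ)⁻¹ • (x * star y * z + z * star y * x) ∈ F)
    (hCheb : ∀ x : A, ∃! v : A, v ∈ F ∧ ‖x - v‖ = Metric.infDist x (F : Set A))
    (e : A) (he : e ∈ F) (he0 : e ≠ 0) (htrip : e * star e * e = e)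
    (hF0 : ∃ y ∈ F, y ≠ 0 ∧ e * star e * y = 0 ∧ y * star e * e = 0) :
    {x : A | e * star e * x = x ∧ x * star e * e = x} ⊆ (F : Set A) := by
  rintro x ⟨hx1, hx2⟩
  obtain ⟨y, hyF, hy0, hy1, hy2⟩ := hF0
  obtain ⟨v, ⟨hvF, hv⟩, huniq⟩ := hCheb x
  have hmin : ∀ w ∈ F, ‖x - w‖ ≤ ‖x - v‖ → w = v := by
    intro w hw hle
    refine huniq w ⟨hw, le_antisymm (hle.trans hv.le) ?_⟩
    rw [← dist_eq_norm]
    exact Metric.infDist_le_dist_of_mem hw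
  have hQ : ∀ z ∈ F, e * star z * e ∈ F := by
    intro z hz
    have h := hFtriple e he z hz e he
    rwa [← two_smul ℂ, smul_smul, inv_mul_cancel₀ two_ne_zero, one_smul] at h
  have htrip' : star e * e * star e = star e := by
    have := congrArg star htrip
    simpa [mul_assoc] using this
  have hp : ‖e * star e‖ ≤ 1 := by
    refine IsStarProjection.norm_le _ ⟨?_, IsSelfAdjoint.mul_star_self e⟩
    rw [IsIdempotentElem, ← mul_assoc, htrip]
  have hq : ‖star e * e‖ ≤ 1 := by
    refine IsStarProjection.norm_le _ ⟨?_, IsSelfAdjoint.star_mul_self e⟩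
    rw [IsIdempotentElem, ← mul_assoc, htrip']
  have hcontr : ∀ z : A, ‖e * star e * z * (star e * e)‖ ≤ ‖z‖ := by
    intro z
    calc ‖e * star e * z * (star e * e)‖ ≤ ‖e * star e * z‖ * ‖star e * e‖ := norm_mul_le _ _
      _ ≤ ‖e * star e * z‖ * 1 := by gcongr
      _ ≤ ‖e * star e‖ * ‖z‖ := by rw [mul_one]; exact norm_mul_le _ _
      _ ≤ 1 * ‖z‖ := by gcongr
      _ = ‖z‖ := one_mul _
  have hPv : e * star e * v * (star e * e) = v := by
    apply hmin
    · have h := hQ _ (hQ v hvF)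
      simpa [mul_assoc] using h
    · have hPx : e * star e * x * (star e * e) = x := by
        rw [hx1, ← mul_assoc, hx2]
      have h := hcontr (x - v)
      rwa [mul_sub, sub_mul, hPx] at h
  have hv1 : e * star e * v = v := by
    rw [← hPv]
    simp only [← mul_assoc, htrip]
  have hv2 : v * star e * e = v := by
    rw [← hPv]
    simp only [mul_assoc] at htrip ⊢
    simp only [htrip]
  set u := x - v with hu
  have hu1 : e * star e * u = u := by rw [hu, mul_sub, hx1, hv1]
  have hu2 : u * (star e * e) = u := by rw [← mul_assoc, hu, sub_mul, sub_mul, hx2, hv2]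
  have ho1 : star u * y = 0 := by
    have h : star u = star u * (e * star e) := by
      have := congrArg star hu1
      simpa [mul_assoc] using this.symm
    rw [h, mul_assoc, hy1, mul_zero]
  have ho2 : u * star y = 0 := by
    have h : star e * e * star y = 0 := by
      have := congrArg star hy2
      simpa [mul_assoc] using this
    rw [← hu2, mul_assoc, h, mul_zero]
  have hyn : ‖y‖ ≠ 0 := norm_ne_zero_iff.mpr hy0
  set c : ℂ := ((‖u‖ / ‖y‖ : ℝ) : ℂ) with hc
  have hcy : ‖c • y‖ = ‖u‖ := by
    rw [norm_smul, hc, Complex.norm_real, Real.norm_of_nonneg (by positivity)]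
    field_simp
  have hle : ‖u - c • y‖ ≤ ‖u‖ := by
    apply norm_sub_le_of_orthogonal
    · rw [mul_smul_comm, ho1, smul_zero]
    · rw [star_smul, mul_smul_comm, ho2, smul_zero]
    · exact hcy.le
  have hfin : v + c • y = v := by
    apply hmin _ (F.add_mem hvF (F.smul_mem c hyF))
    rwa [← sub_sub]
  have hcz : c • y = 0 := by simpa using hfin
  have hu0 : u = 0 := by
    rw [← norm_eq_zero, ← hcy, hcz, norm_zero]
  have hxv : x = v := sub_eq_zero.mp hu0
  rw [hxv]
  exact hvF
end

section
/- If A is a nonzero C*-algebra without a multiplicative unit, then A has infinite rank: for every natural number n there exist nonzero elements a₁, …, aₙ ∈ A which are mutually orthogonal (aᵢ aⱼ* = 0 and aⱼ* aᵢ = 0 for all i ≠ j). -/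
open scoped NonUnitalContinuousFunctionalCalculus in
/-- Infinite quasispectrum gives many orthogonal elements. -/
lemma aux_infinite_spectrum {A : Type*} [NonUnitalCStarAlgebra A] (x : A) (hx : IsSelfAdjoint x)
    (hinf : (quasispectrum ℝ x).Infinite) (n : ℕ) :
    ∃ f : Fin n → A, (∀ i, f i ≠ 0) ∧
      ∀ i j, i ≠ j → f i * star (f j) = 0 ∧ star (f j) * f i = 0 := by
  have hinf' : (quasispectrum ℝ x \ {0}).Infinite := hinf.sdiff (Set.finite_singleton 0)
  haveI := hinf'.to_subtype
  let e := Infinite.natEmbedding ↥(quasispectrum ℝ x \ {0})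
  let t : Fin n → ℝ := fun i => (e i : ℝ)
  have ht : Function.Injective t := by
    intro i j h
    exact Fin.ext (e.injective (Subtype.ext h))
  let g : Fin n → ℝ → ℝ := fun i s =>
    s * ∏ j ∈ Finset.univ.erase i, max 0 (|s - t j| - |s - t i|)
  have hg : ∀ i, Continuous (g i) := fun i => by
    refine continuous_id.mul (continuous_finsetProd _ fun j _ => ?_)
    fun_prop
  have hg0 : ∀ i, g i 0 = 0 := fun i => by simp [g]
  have hgt : ∀ i, g i (t i) ≠ 0 := fun i => by
    refine mul_ne_zero (e i).2.2 (Finset.prod_ne_zero_iff.2 fun j hj => ?_)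
    have hne : t i - t j ≠ 0 := sub_ne_zero.2 (fun h => (Finset.ne_of_mem_erase hj) (ht h).symm)
    have := abs_pos.2 hne
    simp only [sub_self, abs_zero, sub_zero]
    rw [max_eq_right this.le]
    exact this.ne'
  have hgg : ∀ i j, i ≠ j → ∀ s, g i s * g j s = 0 := fun i j hij s => by
    rcases le_total (|s - t j|) (|s - t i|) with h | h
    · have : g i s = 0 := by
        refine mul_eq_zero_of_right _ (Finset.prod_eq_zero (i := j) (by simp [hij.symm]) ?_)
        exact max_eq_left (by linarith)
      rw [this, zero_mul]
    · have : g j s = 0 := by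
        refine mul_eq_zero_of_right _ (Finset.prod_eq_zero (i := i) (by simp [hij]) ?_)
        exact max_eq_left (by linarith)
      rw [this, mul_zero]
  have hmul : ∀ i j, i ≠ j → cfcₙ (g i) x * cfcₙ (g j) x = 0 := fun i j hij => by
    rw [← cfcₙ_mul (g i) (g j) x (hg i).continuousOn (hg0 i) (hg j).continuousOn (hg0 j)]
    rw [show (fun s => g i s * g j s) = fun _ => 0 from funext (hgg i j hij)]
    exact cfcₙ_const_zero ℝ x
  have hstar : ∀ i, star (cfcₙ (g i) x) = cfcₙ (g i) x := fun i =>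
    (cfcₙ_predicate (R := ℝ) (p := IsSelfAdjoint) (g i) x)
  refine ⟨fun i => cfcₙ (g i) x, fun i h => ?_, fun i j hij => ?_⟩
  · have h1 := cfcₙ_map_quasispectrum (R := ℝ) (p := IsSelfAdjoint) (g i) x
      (hg i).continuousOn (hg0 i) hx
    have h2 : g i (t i) ∈ quasispectrum ℝ (cfcₙ (g i) x) := by
      rw [h1]; exact ⟨_, (e i).2.1, rfl⟩
    rw [show cfcₙ (g i) x = 0 from h, CFC.quasispectrum_zero_eq (p := IsSelfAdjoint)] at h2
    exact hgt i h2
  · simp only [hstar]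
    exact ⟨hmul i j hij, hmul j i hij.symm⟩

/-- Finite quasispectrum gives a support projection. -/
lemma aux_proj {A : Type*} [NonUnitalCStarAlgebra A] (x : A) (hx : IsSelfAdjoint x)
    (hfin : (quasispectrum ℝ x).Finite) (hx0 : x ≠ 0) :
    ∃ q y : A, q ≠ 0 ∧ star q = q ∧ q * q = q ∧ q = x * y ∧ q = y * x := by
  have hc : ∀ f : ℝ → ℝ, ContinuousOn f (quasispectrum ℝ x) := fun f => hfin.continuousOn f
  have hid : cfcₙ (fun s : ℝ => s) x = x := cfcₙ_id' ℝ x hx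
  have h1 : cfcₙ (fun s : ℝ => s * s⁻¹) x = x * cfcₙ (fun s : ℝ => s⁻¹) x := by
    rw [cfcₙ_mul (fun s : ℝ => s) (fun s => s⁻¹) x (hc _) rfl (hc _) inv_zero, hid]
  have h2 : cfcₙ (fun s : ℝ => s * s⁻¹) x = cfcₙ (fun s : ℝ => s⁻¹) x * x := by
    rw [show (fun s : ℝ => s * s⁻¹) = fun s => s⁻¹ * s from funext fun s => mul_comm _ _,
      cfcₙ_mul (fun s : ℝ => s⁻¹) (fun s => s) x (hc _) inv_zero (hc _) rfl, hid]
  have h3 : cfcₙ (fun s : ℝ => s * s⁻¹) x * x = x := by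
    conv_rhs => rw [← hid]
    rw [show (fun s : ℝ => s) = fun s => (s * s⁻¹) * s from funext fun s => by simp,
      cfcₙ_mul (fun s : ℝ => s * s⁻¹) (fun s => s) x (hc _) (by simp) (hc _) rfl, hid]
  refine ⟨cfcₙ (fun s : ℝ => s * s⁻¹) x, cfcₙ (fun s : ℝ => s⁻¹) x, ?_, ?_, ?_, h1, h2⟩
  · intro h
    rw [h, zero_mul] at h3
    exact hx0 h3.symm
  · exact (cfcₙ_predicate (R := ℝ) (p := IsSelfAdjoint) (fun s : ℝ => s * s⁻¹) x)
  · conv_lhs => rw [h1]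
    rw [h1, ← mul_assoc, ← h1, h3, h1]

lemma aux_main {A : Type*} [NonUnitalCStarAlgebra A]
    (hnounit : ¬ ∃ e : A, ∀ b : A, e * b = b ∧ b * e = b)
    (hfin : ∀ x : A, IsSelfAdjoint x → (quasispectrum ℝ x).Finite) (n : ℕ) :
    ∃ f : Fin n → A, (∀ i, f i ≠ 0) ∧ (∀ i, star (f i) = f i) ∧ (∀ i, f i * f i = f i) ∧
      ∀ i j, i ≠ j → f i * f j = 0 := by
  induction n with
  | zero => exact ⟨fun _ => 0, fun i => i.elim0, fun i => i.elim0, fun i => i.elim0,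
      fun i => i.elim0⟩
  | succ n ih =>
    obtain ⟨f, h0, hs, hi, ho⟩ := ih
    let p := ∑ i, f i
    have hps : star p = p := by simp [p, star_sum, hs]
    have hfp : ∀ i, f i * p = f i := fun i => by
      simp only [p, Finset.mul_sum]
      rw [Finset.sum_eq_single i (fun j _ hj => ho i j hj.symm) (by simp), hi]
    have hpf : ∀ i, p * f i = f i := fun i => by
      have := congrArg star (hfp i)
      rwa [star_mul, hps, hs] at this
    have hpp : p * p = p := by
      change (∑ i, f i) * p = _
      rw [Finset.sum_mul]
      exact Finset.sum_congr rfl fun i _ => hfp i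
    obtain ⟨b, hb⟩ : ∃ b : A, b - b * p ≠ 0 := by
      by_contra! h
      have h' : ∀ b : A, b * p = b := fun b => (sub_eq_zero.1 (h b)).symm
      refine hnounit ⟨p, fun b => ⟨?_, h' b⟩⟩
      have := congrArg star (h' (star b))
      rwa [star_mul, hps, star_star] at this
    set c := b - b * p with hcdef
    have hcp : c * p = 0 := by rw [hcdef, sub_mul, mul_assoc, hpp, sub_self]
    have hpc : p * star c = 0 := by
      have := congrArg star hcp
      rwa [star_mul, hps, star_zero] at this
    have hx := IsSelfAdjoint.star_mul_self c
    obtain ⟨q, y, hq0, hqs, hqq, hq1, hq2⟩ := aux_proj (star c * c) hx (hfin _ hx)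
      (fun h => hb (CStarRing.star_mul_self_eq_zero_iff c |>.1 h))
    have hpq : p * q = 0 := by
      rw [hq1, ← mul_assoc, ← mul_assoc, hpc, zero_mul, zero_mul]
    have hqp : q * p = 0 := by
      rw [hq2, mul_assoc, mul_assoc, hcp, mul_zero, mul_zero]
    have hfq : ∀ i, f i * q = 0 := fun i => by rw [← hfp i, mul_assoc, hpq, mul_zero]
    have hqf : ∀ i, q * f i = 0 := fun i => by rw [← hpf i, ← mul_assoc, hqp, zero_mul]
    refine ⟨Fin.cons q f, ?_, ?_, ?_, ?_⟩
    · exact Fin.cases (by simpa using hq0) (by simpa using h0)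
    · exact Fin.cases (by simpa using hqs) (by simpa using hs)
    · exact Fin.cases (by simpa using hqq) (by simpa using hi)
    · intro i j
      refine Fin.cases ?_ (fun i => ?_) i <;> refine Fin.cases ?_ (fun j => ?_) j
      · intro h; exact absurd rfl h
      · intro _; simpa using hqf j
      · intro _; simpa using hfq i
      · intro h; simpa using ho i j (fun h' => h (by rw [h']))

/-- If `A` is a nonzero C*-algebra without a multiplicative unit,
then `A` has infinite rank: for every `n` there exist `n` nonzero mutually
orthogonal elements of `A`. -/
theorem nonunital_CStarAlgebra_infinite_rank
    {A : Type*} [NonUnitalNormedRing A] [StarRing A] [CStarRing A]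
    [NormedSpace ℂ A] [IsScalarTower ℂ A A] [SMulCommClass ℂ A A]
    [StarModule ℂ A] [CompleteSpace A]
    (hA0 : ∃ x : A, x ≠ 0)
    (hnounit : ¬ ∃ e : A, ∀ b : A, e * b = b ∧ b * e = b) :
    ∀ n : ℕ, ∃ f : Fin n → A, (∀ i, f i ≠ 0) ∧
      ∀ i j, i ≠ j → f i * star (f j) = 0 ∧ star (f j) * f i = 0 := by
  intro n
  letI : NonUnitalCStarAlgebra A := {}
  by_cases hfin : ∀ x : A, IsSelfAdjoint x → (quasispectrum ℝ x).Finite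
  · obtain ⟨f, h0, hs, -, ho⟩ := aux_main hnounit hfin n
    refine ⟨f, h0, fun i j hij => ?_⟩
    rw [hs]
    exact ⟨ho i j hij, ho j i hij.symm⟩
  · push Not at hfin
    obtain ⟨x, hx, hinf⟩ := hfin
    exact aux_infinite_spectrum x hx hinf n
end

section
/- Let A be a C*-algebra and let e be an extreme point of the closed unit ball of A. Then e is Brown–Pedersen quasi-invertible in A; indeed B(e,e) = 0, i.e., z − e e* z − z e* e + e e* z e* e = 0 for every z ∈ A. -/
open scoped CStarAlgebra in
lemma BPaux_norm_le_one {B : Type*} [CStarAlgebra B] [PartialOrder B] [StarOrderedRing B] (x : B) :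
    ‖x‖ ≤ 1 ↔ star x * x ≤ 1 := by
  rw [← CStarAlgebra.norm_le_one_iff_of_nonneg (star x * x) (star_mul_self_nonneg x),
    CStarRing.norm_star_mul_self]
  constructor
  · intro h; nlinarith [norm_nonneg x]
  · intro h; nlinarith [norm_nonneg x]

lemma BPaux_one {B : Type*} [CStarAlgebra B] (e : B) (he : ‖e‖ ≤ 1) :
    ‖(3 / 2 : ℝ) • e - (1 / 2 : ℝ) • (e * star e * e)‖ ≤ 1 := by
  let _ := CStarAlgebra.spectralOrder B
  have := CStarAlgebra.spectralOrderedRing B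
  rw [BPaux_norm_le_one] at he ⊢
  have h4 : 0 ≤ (4 : ℝ) • (1 : B) - star e * e := by
    have h3 : (0 : B) ≤ (3 : ℝ) • (1 : B) := smul_nonneg (by norm_num) zero_le_one
    have h5 : 0 ≤ (3 : ℝ) • (1 : B) + (1 - star e * e) := add_nonneg h3 (sub_nonneg.2 he)
    convert h5 using 1
    module
  have hsa : IsSelfAdjoint (1 - star e * e) := by
    simp [IsSelfAdjoint]
  have h6 := smul_nonneg (by norm_num : (0 : ℝ) ≤ 1 / 4) (hsa.conjugate_nonneg h4)
  rw [← sub_nonneg]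
  convert h6 using 1
  simp only [star_sub, star_smul, star_mul, star_star, mul_sub, sub_mul, smul_sub,
    smul_mul_assoc, mul_smul_comm, mul_one, one_mul, mul_assoc, star_trivial]
  module

lemma BPaux_two {B : Type*} [CStarAlgebra B] (e z : B) (he : e * star e * e = e)
    (hz : ‖z‖ ≤ 1) (h1 : star e * z = 0) (h2 : z * star e = 0) :
    ‖e + z‖ ≤ 1 := by
  let _ := CStarAlgebra.spectralOrder B
  have := CStarAlgebra.spectralOrderedRing B
  rw [BPaux_norm_le_one] at hz ⊢
  have hsa : IsSelfAdjoint (1 - star e * e) := by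
    simp [IsSelfAdjoint]
  have h6 := hsa.conjugate_nonneg (sub_nonneg.2 hz)
  have h1' : star z * e = 0 := by simpa using congrArg star h1
  have h2' : e * star z = 0 := by simpa using congrArg star h2
  have h3 : z * (1 - star e * e) = z := by rw [mul_sub, ← mul_assoc, h2]; simp
  have h3' : (1 - star e * e) * star z = star z := by rw [sub_mul, mul_assoc, h2']; simp
  have h5 : (1 - star e * e) * (1 - star e * e) = 1 - star e * e := by
    have : star e * e * (star e * e) = star e * e := by
      rw [mul_assoc, ← mul_assoc e, he]
    simp [mul_sub, sub_mul, this]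
  rw [← sub_nonneg]
  convert h6 using 1
  rw [mul_sub (1 - star e * e) 1, sub_mul _ _ (1 - star e * e), mul_one, h5,
    ← mul_assoc _ (star z), h3', mul_assoc (star z), h3]
  simp only [star_add, mul_add, add_mul, h1, h1']
  abel

open scoped CStarAlgebra in
open Unitization in
lemma BPaux_main {A : Type*} [NonUnitalCStarAlgebra A]
    (e : A) (he : e ∈ Set.extremePoints ℝ (Metric.closedBall (0 : A) 1)) :
    ∀ z : A, z - e * star e * z - z * star e * e + e * star e * z * star e * e = 0 := by
  rw [mem_extremePoints_iff_left] at he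
  simp only [mem_closedBall_zero_iff] at he
  obtain ⟨hn, hx⟩ := he
  have key : ∀ y : A, ‖e + y‖ ≤ 1 → ‖e - y‖ ≤ 1 → y = 0 := by
    intro y ha hb
    have := hx (e + y) ha (e - y) hb ⟨1 / 2, 1 / 2, by norm_num, by norm_num, by norm_num, by module⟩
    simpa using this
  have hp : e * star e * e = e := by
    have h3 : ‖e * star e * e‖ ≤ 1 := by
      grw [norm_mul_le, norm_mul_le, norm_star, hn]; nlinarith [norm_nonneg e]
    have := key ((1 / 2 : ℝ) • (e - e * star e * e)) ?_ ?_
    · rw [smul_eq_zero, sub_eq_zero] at this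
      exact (this.resolve_left (by norm_num)).symm
    · have h := BPaux_one (e : A⁺¹) (by rwa [norm_inr])
      rw [← norm_inr (𝕜 := ℂ)]
      convert h using 2
      simp only [inr_add, inr_smul, inr_sub, inr_mul, inr_star]
      module
    · have : e - (1 / 2 : ℝ) • (e - e * star e * e)
          = (1 / 2 : ℝ) • e + (1 / 2 : ℝ) • (e * star e * e) := by module
      rw [this]
      grw [norm_add_le, norm_smul, norm_smul, hn, h3]
      norm_num
  have hp' : star e * e * star e = star e := by
    simpa [mul_assoc] using congrArg star hp
  have two : ∀ z : A, ‖z‖ ≤ 1 → star e * z = 0 → z * star e = 0 → ‖e + z‖ ≤ 1 := by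
    intro z hz h1 h2
    rw [← norm_inr (𝕜 := ℂ), inr_add]
    apply BPaux_two
    · rw [← inr_star, ← inr_mul, ← inr_mul, hp]
    · rwa [norm_inr]
    · rw [← inr_star, ← inr_mul, h1, inr_zero]
    · rw [← inr_star, ← inr_mul, h2, inr_zero]
  have three : ∀ z : A, star e * z = 0 → z * star e = 0 → z = 0 := by
    intro z h1 h2
    have hc : 0 < (‖z‖ + 1)⁻¹ := by positivity
    have hcz : ‖(‖z‖ + 1)⁻¹ • z‖ ≤ 1 := by
      rw [norm_smul, Real.norm_of_nonneg hc.le, inv_mul_le_iff₀ (by positivity)]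
      linarith
    have h1c : star e * ((‖z‖ + 1)⁻¹ • z) = 0 := by
      rw [← Complex.coe_smul, mul_smul_comm, h1, smul_zero]
    have h2c : ((‖z‖ + 1)⁻¹ • z) * star e = 0 := by
      rw [← Complex.coe_smul, smul_mul_assoc, h2, smul_zero]
    have := key ((‖z‖ + 1)⁻¹ • z) (two _ hcz h1c h2c) (by
      rw [sub_eq_add_neg]
      exact two _ (by rwa [norm_neg]) (by rw [mul_neg, h1c, neg_zero]) (by rw [neg_mul, h2c, neg_zero]))
    exact (smul_eq_zero.1 this).resolve_left hc.ne'
  intro z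
  have a1 : ∀ w, star e * (e * (star e * w)) = star e * w := by
    intro w; rw [← mul_assoc, ← mul_assoc, hp']
  have a2 : star e * (e * star e) = star e := by rw [← mul_assoc, hp']
  apply three
  · simp only [mul_add, mul_sub, mul_assoc, a1]; abel
  · simp only [add_mul, sub_mul, mul_assoc, a2]; abel

/-- Let `A` be a C*-algebra and `e` an extreme point of the closed
unit ball of `A`. Then `e` is Brown–Pedersen quasi-invertible; indeed `B(e,e) = 0`:
`z - e e* z - z e* e + e e* z e* e = 0` for every `z ∈ A`. -/
theorem extreme_point_is_BP_quasi_invertible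
    {A : Type*} [NonUnitalNormedRing A] [StarRing A] [CStarRing A]
    [NormedSpace ℂ A] [IsScalarTower ℂ A A] [SMulCommClass ℂ A A]
    [StarModule ℂ A] [CompleteSpace A]
    (e : A) (he : e ∈ Set.extremePoints ℝ (Metric.closedBall (0 : A) 1)) :
    ∀ z : A, z - e * star e * z - z * star e * e + e * star e * z * star e * e = 0 := by
  letI : NonUnitalCStarAlgebra A := {}
  exact BPaux_main e he
end
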